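/- For every d in the set {681, 1329, 1761, 2913, 3769, 5281, 6217, 7057, 7321}, there are no rational numbers x, y with d·y² = f₁₈(x). -/

import Mathlib

/-- A real positive definite binary quadratic form takes a small value at a nonzero
integer vector (Lagrange/Gauss reduction). -/
theorem exists_small_value (A B C : ℝ) (hA : 0 < A) (hD : 0 < 4 * A * C - B ^ 2) :
    ∃ i j : ℤ, (i ≠ 0 ∨ j ≠ 0) ∧
      3 * (A * i ^ 2 + B * i * j + C * j ^ 2) ^ 2 ≤ 4 * A * C - B ^ 2 := by
  set D := 4 * A * C - B ^ 2 with hDdef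
  let q : ℤ × ℤ → ℝ := fun v => A * v.1 ^ 2 + B * v.1 * v.2 + C * v.2 ^ 2
  have hq4 : ∀ v : ℤ × ℤ, 4 * A * q v = (2 * A * v.1 + B * v.2) ^ 2 + D * v.2 ^ 2 := by
    intro v; simp only [q, hDdef]; ring
  have hqpos : ∀ v : ℤ × ℤ, v ≠ 0 → 0 < q v := by
    intro v hv
    have h1 : 0 < 4 * A * q v := by
      rw [hq4]
      by_cases h2 : v.2 = 0
      · have h3 : v.1 ≠ 0 := by
          intro h; apply hv; ext <;> simp [h, h2]
        have : (v.1 : ℝ) ≠ 0 := by exact_mod_cast h3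
        rw [h2]; simp only [Int.cast_zero, mul_zero, add_zero]
        have : 2 * A * (v.1 : ℝ) ≠ 0 := by positivity
        positivity
      · have : (v.2 : ℝ) ≠ 0 := by exact_mod_cast h2
        positivity
    by_contra h
    push Not at h
    nlinarith
  -- finiteness of sublevel sets
  have hfin : {v : ℤ × ℤ | v ≠ 0 ∧ q v ≤ A}.Finite := by
    obtain ⟨K, hK⟩ := exists_nat_gt (4 * A * A / D)
    obtain ⟨L, hL⟩ := exists_nat_gt ((2 * A + |B| * K) / (2 * A))
    apply Set.Finite.subset (s := (Set.Icc (-(L:ℤ)) L) ×ˢ (Set.Icc (-(K:ℤ)) K))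
    · exact (Set.finite_Icc _ _).prod (Set.finite_Icc _ _)
    · rintro v ⟨-, hv⟩
      have h4 := hq4 v
      have h5 : D * (v.2:ℝ) ^ 2 ≤ 4 * A * A := by nlinarith [sq_nonneg (2 * A * (v.1:ℝ) + B * v.2)]
      have h6 : (v.2:ℝ) ^ 2 < K := by
        refine lt_of_le_of_lt ?_ hK
        rw [le_div_iff₀ hD]; linarith
      have h7 : |v.2| ≤ (K:ℤ) := by
        have : (v.2)^2 < (K:ℤ) := by exact_mod_cast h6
        have h8 : |v.2| ≤ v.2 ^ 2 := by
          rw [← sq_abs]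
          by_cases h : |v.2| = 0
          · rw [h]; norm_num
          · have := abs_nonneg v.2
            have : 1 ≤ |v.2| := by omega
            nlinarith
        omega
      have h9 : |2 * A * (v.1:ℝ) + B * v.2| ≤ 2 * A := by
        apply abs_le_of_sq_le_sq _ (by positivity)
        nlinarith [mul_nonneg hD.le (sq_nonneg (v.2:ℝ))]
      have h7' : |(v.2:ℝ)| ≤ K := by exact_mod_cast h7
      have h10 : 2 * A * |(v.1:ℝ)| ≤ 2 * A + |B| * K := by
        have e : 2 * A * (v.1:ℝ) = (2 * A * (v.1:ℝ) + B * v.2) - B * v.2 := by ring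
        calc 2 * A * |(v.1:ℝ)| = |2 * A * (v.1:ℝ)| := by
              rw [abs_mul, abs_of_pos (by positivity : 0 < 2 * A)]
          _ ≤ |2 * A * (v.1:ℝ) + B * v.2| + |B * v.2| := by
              conv_lhs => rw [e]
              exact abs_sub _ _
          _ ≤ 2 * A + |B| * K := by
              rw [abs_mul B]
              exact add_le_add h9 (mul_le_mul_of_nonneg_left h7' (abs_nonneg _))
      have h11 : |(v.1:ℝ)| < L := by
        refine lt_of_le_of_lt ?_ hL
        rw [le_div_iff₀ (by positivity)]; linarith
      have h12 : |v.1| ≤ (L:ℤ) := by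
        have : |v.1| < (L:ℤ) := by exact_mod_cast h11
        exact this.le
      exact ⟨abs_le.mp h12, abs_le.mp h7⟩
  have hne : {v : ℤ × ℤ | v ≠ 0 ∧ q v ≤ A}.Nonempty := ⟨(1, 0), by simp [q]⟩
  obtain ⟨v, ⟨hv0, hvA⟩, hvmin⟩ := Set.exists_min_image _ q hfin hne
  have hmin : ∀ w : ℤ × ℤ, w ≠ 0 → q v ≤ q w := by
    intro w hw
    by_cases h : q w ≤ A
    · exact hvmin w ⟨hw, h⟩
    · push Not at h; linarith
  obtain ⟨i, j⟩ := v
  have hqp := hqpos _ hv0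
  -- primitive
  have hg : Int.gcd i j = 1 := by
    have hg0 : 0 < Int.gcd i j := by
      rw [Int.gcd_pos_iff]
      by_contra h; push Not at h
      exact hv0 (by ext <;> simp [h.1, h.2])
    obtain ⟨a, ha⟩ := Int.gcd_dvd_left i j
    obtain ⟨b, hb⟩ := Int.gcd_dvd_right i j
    have hab : ((a, b) : ℤ × ℤ) ≠ 0 := by
      intro h
      have h1 : a = 0 := congrArg Prod.fst h
      have h2 : b = 0 := congrArg Prod.snd h
      apply hv0
      rw [h1] at ha; rw [h2] at hb
      ext <;> simp <;> omega
    have h1 := hmin _ hab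
    have h2 : q (i, j) = (Int.gcd i j : ℝ) ^ 2 * q (a, b) := by
      have ha' : (i:ℝ) = (Int.gcd i j : ℝ) * a := by exact_mod_cast ha
      have hb' : (j:ℝ) = (Int.gcd i j : ℝ) * b := by exact_mod_cast hb
      simp only [q]
      generalize (Int.gcd i j : ℝ) = G at *
      rw [ha', hb']; ring
    have h3 := hqpos _ hab
    by_contra h
    have h4 : (2:ℝ) ≤ (Int.gcd i j : ℝ) := by
      have : 2 ≤ Int.gcd i j := by omega
      exact_mod_cast this
    rw [h2] at h1
    have h5 : (4:ℝ) ≤ (Int.gcd i j : ℝ) ^ 2 := by nlinarith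
    have h6 := mul_le_mul_of_nonneg_right h5 h3.le
    linarith
  have hbez := Int.gcd_eq_gcd_ab i j
  rw [hg] at hbez
  set u := Int.gcdA i j
  set w := Int.gcdB i j
  have hdet : (i:ℝ) * u + j * w = 1 := by exact_mod_cast hbez.symm
  -- second basis vector
  set B' : ℝ := 2 * A * i * (-w) + B * (i * u + j * (-w)) + 2 * C * j * u with hB'
  set t : ℤ := round (-B' / (2 * q (i, j))) with ht
  have hround := abs_sub_round (-B' / (2 * q (i, j)))
  rw [← ht] at hround
  have hw0 : ((-w + t * i, u + t * j) : ℤ × ℤ) ≠ 0 := by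
    intro h
    have h1 : -w + t * i = 0 := congrArg Prod.fst h
    have h2 : u + t * j = 0 := congrArg Prod.snd h
    have : (1:ℤ) = i * (u + t * j) - j * (-w + t * i) := by
      have := hbez; push_cast at this; linarith
    rw [h1, h2] at this; simp at this
  have hC := hmin _ hw0
  set a := q (i, j) with haq
  set c := q (-w + t * i, u + t * j) with hcq
  set b := B' + 2 * a * t with hbq
  have hdisc : 4 * a * c - b ^ 2 = D := by
    have : 4 * a * c - b ^ 2 = D * ((i:ℝ) * u + j * w) ^ 2 := by
      rw [hbq, hcq, haq, hB', hDdef]; simp only [q]; push_cast; ring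
    rw [this, hdet]; ring
  have hb : b ^ 2 ≤ a ^ 2 := by
    have h1 : b = -(2 * a) * (-B' / (2 * a) - t) := by
      rw [hbq]; field_simp; ring
    have h2 : |b| ≤ a := by
      rw [h1, abs_mul, abs_neg, abs_of_pos (by positivity)]
      nlinarith
    exact sq_le_sq' (by linarith [neg_abs_le b]) (by linarith [le_abs_self b])
  refine ⟨i, j, ?_, ?_⟩
  · by_contra h; push Not at h
    exact hv0 (by ext <;> simp [h.1, h.2])
  · have : A * (i:ℝ) ^ 2 + B * i * j + C * j ^ 2 = a := rfl
    rw [this]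
    nlinarith


/-- The quadratic order `ℤ[τ]` with `τ² = k + τ`, of discriminant `1 + 4 * k`. -/
abbrev QO (k : ℤ) := QuadraticAlgebra ℤ k 1

/-- If `N(ρ) = c z³` and `γ` lies in the ideal of norm `z` attached to `ρ`, then
`m³ ρ = μ γ³` with `N(γ) = z m`, `N(μ) = c m³`. -/
theorem cube_descent (k A y c z g v : ℤ) (hz : z ≠ 0) (hcop : IsCoprime z y)
    (hN : A ^ 2 + A * y - k * y ^ 2 = c * z ^ 3) (hL : z ∣ y * g - v * A) :
    ∃ m p q : ℤ, g ^ 2 + g * v - k * v ^ 2 = z * m ∧ p ^ 2 + p * q - k * q ^ 2 = c * m ^ 3 ∧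
      (m : QO k) ^ 3 * ⟨A, y⟩ = ⟨p, q⟩ * (⟨g, v⟩ : QO k) ^ 3 ∧
      (z : QO k) ^ 3 * ⟨p, q⟩ = ⟨A, y⟩ * (⟨g + v, -v⟩ : QO k) ^ 3 := by
  obtain ⟨e, he⟩ := hL
  have hm : z ∣ g ^ 2 + g * v - k * v ^ 2 := by
    have h1 : z ∣ y ^ 2 * (g ^ 2 + g * v - k * v ^ 2) := by
      refine ⟨z * e ^ 2 + e * v * (2 * A + y) + v ^ 2 * c * z ^ 2, ?_⟩
      have : y * g = z * e + v * A := by linarith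
      calc y ^ 2 * (g ^ 2 + g * v - k * v ^ 2)
          = (y * g) ^ 2 + (y * g) * (v * y) - k * y ^ 2 * v ^ 2 := by ring
        _ = (z * e + v * A) ^ 2 + (z * e + v * A) * (v * y) - k * y ^ 2 * v ^ 2 := by rw [this]
        _ = z ^ 2 * e ^ 2 + z * e * v * (2 * A + y) +
              v ^ 2 * (A ^ 2 + A * y - k * y ^ 2) := by ring
        _ = _ := by rw [hN]; ring
    exact (hcop.pow_right).dvd_of_dvd_mul_left h1
  obtain ⟨m, hm⟩ := hm
  -- the product `ρ γ̄³`
  set ρ : QO k := ⟨A, y⟩ with hρ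
  set ρ' : QO k := ⟨A + y, -y⟩ with hρ'
  set γ : QO k := ⟨g, v⟩ with hγ
  set γ' : QO k := ⟨g + v, -v⟩ with hγ'
  have hρρ : ρ * ρ' = ((c * z ^ 3 : ℤ) : QO k) := by
    rw [← hN]; ext <;> simp [hρ, hρ', -Int.cast_pow, -Int.cast_mul, -Int.cast_sub, -Int.cast_add] <;> ring
  have hγγ : γ * γ' = ((z * m : ℤ) : QO k) := by
    rw [← hm]; ext <;> simp [hγ, hγ', -Int.cast_pow, -Int.cast_mul, -Int.cast_sub, -Int.cast_add] <;> ring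
  have hyγ : (y : QO k) * γ' = (z : QO k) * e + v * ρ' := by
    ext
    · simp [hρ', hγ']; linarith
    · simp [hρ', hγ']; ring
  have hdiv : (y : QO k) ^ 3 * (ρ * γ' ^ 3) = (z : QO k) ^ 3 *
      (ρ * e ^ 3 + 3 * z ^ 2 * e ^ 2 * v * c + 3 * z * e * v ^ 2 * c * ρ' + v ^ 3 * c * ρ' ^ 2) := by
    have h1 : (y : QO k) ^ 3 * (ρ * γ' ^ 3) = ρ * (y * γ') ^ 3 := by ring
    rw [h1, hyγ]
    have h2 : ρ * ((z : QO k) * e + v * ρ') ^ 3 = z ^ 3 * (ρ * e ^ 3) + (ρ * ρ') *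
      (3 * z ^ 2 * e ^ 2 * v + 3 * z * e * v ^ 2 * ρ' + v ^ 3 * ρ' ^ 2) := by ring
    rw [h2, hρρ]; push_cast; ring
  obtain ⟨W, hW⟩ : ∃ W, W = ρ * γ' ^ 3 := ⟨_, rfl⟩
  obtain ⟨V, hV⟩ : ∃ V, V = (ρ * e ^ 3 + 3 * z ^ 2 * e ^ 2 * v * c +
    3 * z * e * v ^ 2 * c * ρ' + v ^ 3 * c * ρ' ^ 2) := ⟨_, rfl⟩
  rw [← hW, ← hV] at hdiv
  have key : ∀ (n : ℤ) (X : QO k), ((n : QO k) ^ 3 * X).re = n ^ 3 * X.re ∧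
      ((n : QO k) ^ 3 * X).im = n ^ 3 * X.im := by
    intro n X
    have : (n : QO k) ^ 3 = ((n ^ 3 : ℤ) : QO k) := by push_cast; rfl
    rw [this]
    generalize n ^ 3 = l
    constructor <;> simp
  have h1 : y ^ 3 * W.re = z ^ 3 * V.re := by
    rw [← (key y W).1, hdiv, (key z V).1]
  have h2 : y ^ 3 * W.im = z ^ 3 * V.im := by
    rw [← (key y W).2, hdiv, (key z V).2]
  have hcop3 : IsCoprime (z ^ 3) (y ^ 3) := hcop.pow
  obtain ⟨p, hp⟩ : z ^ 3 ∣ W.re := hcop3.dvd_of_dvd_mul_left ⟨_, h1⟩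
  obtain ⟨q, hq⟩ : z ^ 3 ∣ W.im := hcop3.dvd_of_dvd_mul_left ⟨_, h2⟩
  have hWμ : (z : QO k) ^ 3 * ⟨p, q⟩ = W := by
    ext
    · rw [(key z _).1, hp]
    · rw [(key z _).2, hq]
  have hz3 : z ^ 3 ≠ 0 := pow_ne_zero 3 hz
  have hmain : (m : QO k) ^ 3 * ρ = ⟨p, q⟩ * γ ^ 3 := by
    have h3 : (z : QO k) ^ 3 * ((m : QO k) ^ 3 * ρ) = (z : QO k) ^ 3 * (⟨p, q⟩ * γ ^ 3) := by
      have : (z : QO k) ^ 3 * (⟨p, q⟩ * γ ^ 3) = (γ * γ') ^ 3 * ρ := by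
        rw [← mul_assoc, hWμ, hW]; ring
      rw [this, hγγ]; push_cast; ring
    ext
    · have := congrArg QuadraticAlgebra.re h3
      rw [(key z _).1, (key z _).1] at this
      exact mul_left_cancel₀ hz3 this
    · have := congrArg QuadraticAlgebra.im h3
      rw [(key z _).2, (key z _).2] at this
      exact mul_left_cancel₀ hz3 this
  refine ⟨m, p, q, hm, ?_, hmain, by rw [hWμ, hW]⟩
  have hn := congrArg QuadraticAlgebra.norm (hWμ.trans hW)
  rw [map_mul, map_mul, map_pow, map_pow, QuadraticAlgebra.norm_intCast] at hn
  simp only [QuadraticAlgebra.norm_def, hρ, hγ'] at hn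
  have hn2 : z ^ 6 * (p ^ 2 + p * q - k * q ^ 2) = z ^ 6 * (c * m ^ 3) := by
    have h5 : z ^ 6 * (p ^ 2 + p * q - k * q ^ 2) =
      (A ^ 2 + A * y - k * y ^ 2) * (g ^ 2 + g * v - k * v ^ 2) ^ 3 := by
      linear_combination hn
    rw [h5, hN, hm]; ring
  exact mul_left_cancel₀ (pow_ne_zero 6 hz) hn2


/-- Evaluation of `ℤ[τ]` at a root `u` of `u² = k + u` in a commutative ring. -/
theorem exists_evalHom {R : Type*} [CommRing R] (k : ℤ) (u : R) (hu : u * u = (k : R) + u) :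
    ∃ φ : QO k →+* R, ∀ a b : ℤ, φ ⟨a, b⟩ = (a : R) + (b : R) * u := by
  refine ⟨(QuadraticAlgebra.lift ⟨u, by simpa using hu⟩ : QO k →ₐ[ℤ] R).toRingHom, ?_⟩
  intro a b
  simp [QuadraticAlgebra.lift]

theorem imag_descent (k A y c z : ℤ) (hk : 1 + 4 * k < 0) (hz : 0 < z) (hcop : IsCoprime z y)
    (hN : A ^ 2 + A * y - k * y ^ 2 = c * z ^ 3) :
    ∃ m p q g v : ℤ, 0 < m ∧ 3 * m ^ 2 ≤ -(1 + 4 * k) ∧ g ^ 2 + g * v - k * v ^ 2 = z * m ∧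
      p ^ 2 + p * q - k * q ^ 2 = c * m ^ 3 ∧
      (m : QO k) ^ 3 * ⟨A, y⟩ = ⟨p, q⟩ * (⟨g, v⟩ : QO k) ^ 3 := by
  obtain ⟨s, t, hst⟩ := hcop
  set b0 := t * A with hb0
  have hzr : (0:ℝ) < z := by exact_mod_cast hz
  have hkr : (1:ℝ) + 4 * k < 0 := by exact_mod_cast hk
  obtain ⟨i, j, hij, hq⟩ := exists_small_value ((z:ℝ) ^ 2) (z * (2 * b0 + 1)) (b0 ^ 2 + b0 - k)
    (by positivity) (by
      have : 4 * (z:ℝ) ^ 2 * (b0 ^ 2 + b0 - k) - (z * (2 * b0 + 1)) ^ 2 = z ^ 2 * (-(1 + 4 * k)) := by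
        ring
      rw [this]
      have : (0:ℝ) < -(1 + 4 * k) := by linarith
      positivity)
  set g := i * z + j * b0 with hg
  have hL : z ∣ y * g - j * A := by
    refine ⟨y * i - j * s * A, ?_⟩
    rw [hg, hb0]
    linear_combination (A * j) * hst
  obtain ⟨m, p, q, hm, hμ, hmain, -⟩ := cube_descent k A y c z g j hz.ne' ⟨s, t, hst⟩ hN hL
  have h4 : 4 * (z * m) = (2 * g + j) ^ 2 + (-(1 + 4 * k)) * j ^ 2 := by rw [← hm]; ring
  have hpos : 0 < z * m := by
    by_cases hj : j = 0
    · have hi : i ≠ 0 := by tauto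
      have : g ≠ 0 := by rw [hg, hj]; simp; exact ⟨hi, hz.ne'⟩
      have : 0 < g ^ 2 := by positivity
      rw [hj] at h4; nlinarith
    · have h1 : 0 < j ^ 2 := by positivity
      nlinarith [sq_nonneg (2 * g + j)]
  refine ⟨m, p, q, g, j, by nlinarith, ?_, hm, hμ, hmain⟩
  have h5 : (z:ℝ) ^ 2 * i ^ 2 + z * (2 * b0 + 1) * i * j + (b0 ^ 2 + b0 - k) * j ^ 2 = z * m := by
    have : (g:ℝ) ^ 2 + g * j - k * j ^ 2 = z * m := by exact_mod_cast hm
    rw [← this, hg]; push_cast; ring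
  rw [h5] at hq
  have h6 : (z:ℝ) ^ 2 * (3 * m ^ 2) ≤ (z:ℝ) ^ 2 * (-(1 + 4 * k)) := by linarith
  have h7 := le_of_mul_le_mul_left h6 (by positivity)
  exact_mod_cast h7

set_option maxHeartbeats 2000000 in
theorem real_descent (k A y c z : ℤ) (hk : 0 < 1 + 4 * k)
    (hsq : ∀ a b : ℤ, a ^ 2 = (1 + 4 * k) * b ^ 2 → b = 0) (hz : 0 < z) (hc : c ≠ 0)
    (hcop : IsCoprime z y) (hN : A ^ 2 + A * y - k * y ^ 2 = c * z ^ 3) :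
    ∃ m p q g v : ℤ, m ≠ 0 ∧ 3 * m ^ 2 ≤ 1 + 4 * k ∧
      p ^ 2 + p * q - k * q ^ 2 = c * m ^ 3 ∧
      (m : QO k) ^ 3 * ⟨A, y⟩ = ⟨p, q⟩ * (⟨g, v⟩ : QO k) ^ 3 ∧
      ∃ Q : ℝ, 0 ≤ Q ∧ 3 * Q ^ 2 ≤ 4 * (1 + 4 * k) ∧
        (((2 * p + q) ^ 2 + (1 + 4 * k) * q ^ 2 : ℤ) : ℝ) ≤ 4 * |(c:ℝ)| * Q ^ 3 := by
  obtain ⟨s, t, hst⟩ := hcop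
  set b0 := t * A with hb0
  have hzr : (0:ℝ) < z := by exact_mod_cast hz
  have hkr : (0:ℝ) < 1 + 4 * k := by exact_mod_cast hk
  set r := Real.sqrt (1 + 4 * k) with hr
  have hr2 : r ^ 2 = 1 + 4 * k := Real.sq_sqrt hkr.le
  obtain ⟨φ, hφ⟩ := exists_evalHom k ((1 + r) / 2) (by linear_combination hr2 / 4)
  obtain ⟨ψ, hψ⟩ := exists_evalHom k ((1 - r) / 2) (by linear_combination hr2 / 4)
  have hprod : ∀ a b : ℤ, φ ⟨a, b⟩ * ψ ⟨a, b⟩ = ((a ^ 2 + a * b - k * b ^ 2 : ℤ) : ℝ) := by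
    intro a b; rw [hφ, hψ]; push_cast
    linear_combination (- (b:ℝ) ^ 2 / 4) * hr2
  set R1 := φ ⟨A, y⟩ with hR1
  set R2 := ψ ⟨A, y⟩ with hR2
  have hRR : R1 * R2 = c * z ^ 3 := by rw [hR1, hR2, hprod, hN]; push_cast; ring
  have hcr : (c:ℝ) ≠ 0 := by exact_mod_cast hc
  have hRne : R1 * R2 ≠ 0 := by rw [hRR]; positivity
  have hR1ne : R1 ≠ 0 := left_ne_zero_of_mul hRne
  have hR2ne : R2 ≠ 0 := right_ne_zero_of_mul hRne
  have hRabs : |R1| * |R2| = |(c:ℝ)| * z ^ 3 := by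
    rw [← abs_mul, hRR, abs_mul, abs_of_pos (by positivity : (0:ℝ) < (z:ℝ) ^ 3)]
  obtain ⟨T, hT, hT3⟩ : ∃ T : ℝ, 0 < T ∧ T ^ 3 = |R2| / |R1| := by
    refine ⟨(|R2| / |R1|) ^ ((1:ℝ) / 3), by positivity, ?_⟩
    rw [← Real.rpow_natCast, ← Real.rpow_mul (by positivity)]
    norm_num
  set θ1 : ℝ := b0 + (1 + r) / 2 with hθ1
  set θ2 : ℝ := b0 + (1 - r) / 2 with hθ2
  have hdisc : 4 * ((z:ℝ) ^ 2 * (T + 1 / T)) * (T * θ1 ^ 2 + θ2 ^ 2 / T) -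
      (2 * z * (T * θ1 + θ2 / T)) ^ 2 = 4 * z ^ 2 * (1 + 4 * k) := by
    rw [← hr2]
    have : r = θ1 - θ2 := by rw [hθ1, hθ2]; ring
    rw [this]; field_simp; ring
  obtain ⟨i, j, hij, hq⟩ := exists_small_value ((z:ℝ) ^ 2 * (T + 1 / T))
    (2 * z * (T * θ1 + θ2 / T)) (T * θ1 ^ 2 + θ2 ^ 2 / T)
    (by positivity) (by rw [hdisc]; positivity)
  rw [hdisc] at hq
  set g := i * z + j * b0 with hg
  have hL : z ∣ y * g - j * A := by
    refine ⟨y * i - j * s * A, ?_⟩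
    rw [hg, hb0]
    linear_combination (A * j) * hst
  obtain ⟨m, p, q, hm, hμ, hmain, hmain2⟩ := cube_descent k A y c z g j hz.ne' ⟨s, t, hst⟩ hN hL
  set G1 := φ ⟨g, j⟩ with hG1
  set G2 := ψ ⟨g, j⟩ with hG2
  have hG1' : G1 = i * z + j * θ1 := by rw [hG1, hφ, hg, hθ1]; push_cast; ring
  have hG2' : G2 = i * z + j * θ2 := by rw [hG2, hψ, hg, hθ2]; push_cast; ring
  have hGG : G1 * G2 = z * m := by rw [hG1, hG2, hprod, hm]; push_cast; ring
  set S := T * G1 ^ 2 + G2 ^ 2 / T with hS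
  have hSq : (z:ℝ) ^ 2 * (T + 1 / T) * i ^ 2 + 2 * z * (T * θ1 + θ2 / T) * i * j +
      (T * θ1 ^ 2 + θ2 ^ 2 / T) * j ^ 2 = S := by
    rw [hS, hG1', hG2']; field_simp; ring
  rw [hSq] at hq
  have hS0 : 0 ≤ S := by positivity
  have hm0 : m ≠ 0 := by
    intro h0
    have h4 : (2 * g + j) ^ 2 = (1 + 4 * k) * j ^ 2 := by
      rw [h0] at hm; linear_combination 4 * hm
    have hj := hsq _ _ h4
    have hi : i ≠ 0 := by tauto
    rw [hj] at h4
    have : g = 0 := by nlinarith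
    rw [hg, hj] at this
    simp at this
    rcases this with h | h
    · exact hi h
    · exact hz.ne' h
  -- bound for `m`
  have hSm : 4 * (z * m : ℝ) ^ 2 ≤ S ^ 2 := by
    rw [← hGG]
    have : S ^ 2 - 4 * (G1 * G2) ^ 2 = (T * G1 ^ 2 - G2 ^ 2 / T) ^ 2 := by
      rw [hS]; field_simp; ring
    have h9 := sq_nonneg (T * G1 ^ 2 - G2 ^ 2 / T)
    linarith
  have hmb : 3 * (m:ℝ) ^ 2 ≤ 1 + 4 * k := by
    have : (4 * (z:ℝ) ^ 2) * (3 * m ^ 2) ≤ (4 * (z:ℝ) ^ 2) * (1 + 4 * k) := by linarith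
    exact le_of_mul_le_mul_left this (by positivity)
  refine ⟨m, p, q, g, j, hm0, by exact_mod_cast hmb, hμ, hmain, S / z, by positivity, ?_, ?_⟩
  · rw [div_pow]
    have : 3 * (S ^ 2 / (z:ℝ) ^ 2) = (3 * S ^ 2) / z ^ 2 := by ring
    rw [this, div_le_iff₀ (by positivity)]
    linarith
  · set M1 := φ ⟨p, q⟩ with hM1
    set M2 := ψ ⟨p, q⟩ with hM2
    have hsum : (((2 * p + q) ^ 2 + (1 + 4 * k) * q ^ 2 : ℤ) : ℝ) = 2 * (M1 ^ 2 + M2 ^ 2) := by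
      rw [hM1, hM2, hφ, hψ]; push_cast
      linear_combination (- (q:ℝ) ^ 2) * hr2
    have hc1 : φ (⟨g + j, -j⟩ : QO k) = G2 := by
      rw [hG2, hφ, hψ]; push_cast; ring
    have hc2 : ψ (⟨g + j, -j⟩ : QO k) = G1 := by
      rw [hG1, hφ, hψ]; push_cast; ring
    have e1 : (z:ℝ) ^ 3 * M1 = R1 * G2 ^ 3 := by
      have := congrArg φ hmain2
      simpa [map_mul, map_pow, hc1] using this
    have e2 : (z:ℝ) ^ 3 * M2 = R2 * G1 ^ 3 := by
      have := congrArg ψ hmain2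
      simpa [map_mul, map_pow, hc2] using this
    have b1 : G1 ^ 2 ≤ S / T := by
      rw [le_div_iff₀ hT]
      have : 0 ≤ G2 ^ 2 / T := by positivity
      rw [hS]; linarith
    have b2 : G2 ^ 2 ≤ S * T := by
      have h1 : S * T = T ^ 2 * G1 ^ 2 + G2 ^ 2 := by rw [hS]; field_simp
      rw [h1]; nlinarith [sq_nonneg (T * G1)]
    have hz6 : (0:ℝ) < (z:ℝ) ^ 6 := by positivity
    have f1 : (z:ℝ) ^ 6 * M1 ^ 2 ≤ (|(c:ℝ)| * z ^ 3) * S ^ 3 := by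
      calc (z:ℝ) ^ 6 * M1 ^ 2 = (z ^ 3 * M1) ^ 2 := by ring
        _ = |R1| ^ 2 * (G2 ^ 2) ^ 3 := by rw [e1, sq_abs]; ring
        _ ≤ |R1| ^ 2 * (S * T) ^ 3 := by gcongr
        _ = |R1| ^ 2 * S ^ 3 * T ^ 3 := by ring
        _ = (|R1| * |R2|) * S ^ 3 := by
            rw [hT3]
            have : |R1| ≠ 0 := abs_ne_zero.mpr hR1ne
            field_simp
        _ = _ := by rw [hRabs]
    have f2 : (z:ℝ) ^ 6 * M2 ^ 2 ≤ (|(c:ℝ)| * z ^ 3) * S ^ 3 := by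
      calc (z:ℝ) ^ 6 * M2 ^ 2 = (z ^ 3 * M2) ^ 2 := by ring
        _ = |R2| ^ 2 * (G1 ^ 2) ^ 3 := by rw [e2, sq_abs]; ring
        _ ≤ |R2| ^ 2 * (S / T) ^ 3 := by gcongr
        _ = |R2| ^ 2 * S ^ 3 / T ^ 3 := by ring
        _ = (|R1| * |R2|) * S ^ 3 := by
            rw [hT3]
            have : |R1| ≠ 0 := abs_ne_zero.mpr hR1ne
            have : |R2| ≠ 0 := abs_ne_zero.mpr hR2ne
            field_simp
        _ = _ := by rw [hRabs]
    have hfin : (z:ℝ) ^ 6 * (2 * (M1 ^ 2 + M2 ^ 2)) ≤ z ^ 6 * (4 * |(c:ℝ)| * (S / z) ^ 3) := by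
      have : (z:ℝ) ^ 6 * (4 * |(c:ℝ)| * (S / z) ^ 3) = 4 * ((|(c:ℝ)| * z ^ 3) * S ^ 3) := by
        field_simp
      rw [this]; linarith
    rw [hsum]
    exact le_of_mul_le_mul_left hfin hz6


/-- A coprime integral solution of the homogenised equation `d y² = F(x, w)`. -/
def IsPt (d x w y : ℤ) : Prop :=
  IsCoprime x w ∧ d * y ^ 2 = x ^ 6 + 2 * x ^ 5 * w + 5 * x ^ 4 * w ^ 2 + 10 * x ^ 3 * w ^ 3
    + 10 * x ^ 2 * w ^ 4 + 4 * x * w ^ 5 + w ^ 6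

theorem exists_pt (d : ℤ) (hd : Squarefree d) (x y : ℚ) (h : (d : ℚ) * y ^ 2 =
      x ^ 6 + 2 * x ^ 5 + 5 * x ^ 4 + 10 * x ^ 3 + 10 * x ^ 2 + 4 * x + 1) :
    ∃ X W Y : ℤ, IsPt d X W Y := by
  have hx : x = (x.num : ℚ) / (x.den : ℚ) := (Rat.num_div_den x).symm
  have hden : (x.den : ℚ) ≠ 0 := by exact_mod_cast x.den_ne_zero
  set X := x.num with hX
  set W : ℤ := (x.den : ℤ) with hW
  have hWq : (x.den : ℚ) = (W : ℚ) := by rw [hW]; simp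
  rw [hWq] at hx hden
  set F : ℤ := X ^ 6 + 2 * X ^ 5 * W + 5 * X ^ 4 * W ^ 2 + 10 * X ^ 3 * W ^ 3
    + 10 * X ^ 2 * W ^ 4 + 4 * X * W ^ 5 + W ^ 6 with hF
  have hcop : IsCoprime X W := by
    rw [Int.isCoprime_iff_gcd_eq_one, hX, hW, Int.gcd_eq_natAbs]
    simpa using x.reduced
  set r : ℚ := y * W ^ 3 with hr
  have h1 : (d : ℚ) * r ^ 2 = F := by
    have : (d : ℚ) * r ^ 2 = (d * y ^ 2) * W ^ 6 := by rw [hr]; ring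
    rw [this, h, hx, hF]
    push_cast
    field_simp
  have hrd : (r.den : ℚ) ≠ 0 := by exact_mod_cast r.den_ne_zero
  have h2 : d * r.num ^ 2 = F * (r.den : ℤ) ^ 2 := by
    have hr' : r = (r.num : ℚ) / (r.den : ℚ) := (Rat.num_div_den r).symm
    rw [hr'] at h1
    field_simp at h1
    rw [mul_comm F]
    exact_mod_cast h1
  have hc2 : IsCoprime ((r.den : ℤ) ^ 2) (r.num ^ 2) := by
    apply IsCoprime.pow
    rw [Int.isCoprime_iff_gcd_eq_one, Int.gcd_eq_natAbs]
    simpa using r.reduced.symm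
  have h3 : (r.den : ℤ) ^ 2 ∣ d := hc2.dvd_of_dvd_mul_right ⟨F, by rw [h2]; ring⟩
  have h4 := hd (r.den : ℤ) (by rw [← sq]; exact h3)
  have h5 : (r.den : ℤ) ^ 2 = 1 := by
    rcases Int.isUnit_iff.mp h4 with h | h <;> rw [h] <;> norm_num
  rw [h5, mul_one] at h2
  exact ⟨X, W, r.num, hcop, h2⟩

theorem cube_comp (k m A y p q g v : ℤ)
    (h : (m : QO k) ^ 3 * ⟨A, y⟩ = ⟨p, q⟩ * (⟨g, v⟩ : QO k) ^ 3) :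
    m ^ 3 * A = p * (g ^ 3 + 3 * k * g * v ^ 2 + k * v ^ 3)
        + k * q * (3 * g ^ 2 * v + 3 * g * v ^ 2 + (1 + k) * v ^ 3) ∧
    m ^ 3 * y = p * (3 * g ^ 2 * v + 3 * g * v ^ 2 + (1 + k) * v ^ 3)
        + q * (g ^ 3 + 3 * k * g * v ^ 2 + k * v ^ 3)
        + q * (3 * g ^ 2 * v + 3 * g * v ^ 2 + (1 + k) * v ^ 3) := by
  have h' : ((m ^ 3 : ℤ) : QO k) * ⟨A, y⟩ = ⟨p, q⟩ * (⟨g, v⟩ : QO k) ^ 3 := by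
    rw [← h]; push_cast; ring
  generalize m ^ 3 = l at h' ⊢
  have h1 := congrArg QuadraticAlgebra.re h'
  have h2 := congrArg QuadraticAlgebra.im h'
  simp [pow_succ] at h1 h2
  constructor
  · linear_combination h1
  · linear_combination h2

/-- obstruction modulo 2 -/
theorem obs2 (k m y p q g v : ℤ) (hk : k % 2 = 1) (hm : m % 2 = 1) (hq : q % 2 = 0)
    (hy : y % 2 = 1)
    (h : m ^ 3 * y = p * (3 * g ^ 2 * v + 3 * g * v ^ 2 + (1 + k) * v ^ 3)
        + q * (g ^ 3 + 3 * k * g * v ^ 2 + k * v ^ 3)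
        + q * (3 * g ^ 2 * v + 3 * g * v ^ 2 + (1 + k) * v ^ 3)) : False := by
  have key : ∀ p g v : ZMod 2, (1:ZMod 2) ^ 3 * 1 ≠
      p * (3 * g ^ 2 * v + 3 * g * v ^ 2 + (1 + 1) * v ^ 3)
        + 0 * (g ^ 3 + 3 * 1 * g * v ^ 2 + 1 * v ^ 3)
        + 0 * (3 * g ^ 2 * v + 3 * g * v ^ 2 + (1 + 1) * v ^ 3) := by decide
  have e : ∀ a b : ℤ, a % 2 = b % 2 → (a : ZMod 2) = b :=
    fun a b hab => (ZMod.intCast_eq_intCast_iff a b 2).mpr hab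
  have hk' : (k : ZMod 2) = 1 := by exact_mod_cast e k 1 hk
  have hm' : (m : ZMod 2) = 1 := by exact_mod_cast e m 1 hm
  have hq' : (q : ZMod 2) = 0 := by exact_mod_cast e q 0 hq
  have hy' : (y : ZMod 2) = 1 := by exact_mod_cast e y 1 hy
  have h3 := congrArg (Int.cast : ℤ → ZMod 2) h
  push_cast at h3
  rw [hk', hm', hq', hy'] at h3
  exact key _ _ _ h3

/-- obstruction modulo 3 -/
theorem obs3 (k m y p q g v : ℤ) (hk : k % 3 = 2) (hm : m % 3 ≠ 0) (hq : q % 3 = 0)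
    (hy : y % 3 ≠ 0)
    (h : m ^ 3 * y = p * (3 * g ^ 2 * v + 3 * g * v ^ 2 + (1 + k) * v ^ 3)
        + q * (g ^ 3 + 3 * k * g * v ^ 2 + k * v ^ 3)
        + q * (3 * g ^ 2 * v + 3 * g * v ^ 2 + (1 + k) * v ^ 3)) : False := by
  have e : ∀ a b : ℤ, a % 3 = b % 3 → (a : ZMod 3) = b :=
    fun a b hab => (ZMod.intCast_eq_intCast_iff a b 3).mpr hab
  have key : ∀ m y p g v : ZMod 3, m ≠ 0 → y ≠ 0 → m ^ 3 * y ≠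
      p * (3 * g ^ 2 * v + 3 * g * v ^ 2 + (1 + 2) * v ^ 3)
        + 0 * (g ^ 3 + 3 * 2 * g * v ^ 2 + 2 * v ^ 3)
        + 0 * (3 * g ^ 2 * v + 3 * g * v ^ 2 + (1 + 2) * v ^ 3) := by decide +kernel
  have hk' : (k : ZMod 3) = 2 := by exact_mod_cast e k 2 hk
  have hq' : (q : ZMod 3) = 0 := by exact_mod_cast e q 0 hq
  have hne : ∀ a : ℤ, a % 3 ≠ 0 → (a : ZMod 3) ≠ 0 := by
    intro a ha h0
    exact ha (Int.emod_eq_zero_of_dvd ((ZMod.intCast_zmod_eq_zero_iff_dvd a 3).mp h0))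
  have h3 := congrArg (Int.cast : ℤ → ZMod 3) h
  push_cast at h3
  rw [hk', hq'] at h3
  exact key _ _ _ _ _ (hne m hm) (hne y hy) h3

/-- obstruction at 2, when `μ` is rational and divisible by 8 -/
theorem obs4 (k c z m y p g v : ℤ) (hk : k % 2 = 1) (hm : m % 8 = 4)
    (hy : y % 2 = 1) (hn : g ^ 2 + g * v - k * v ^ 2 = z * m)
    (hp : p ^ 2 = c * m ^ 3)
    (h : m ^ 3 * y = p * (3 * g ^ 2 * v + 3 * g * v ^ 2 + (1 + k) * v ^ 3)) : False := by
  obtain ⟨n, rfl⟩ : ∃ n, m = 4 * n := ⟨m / 4, by omega⟩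
  have hn2 : n % 2 = 1 := by omega
  have h8 : (8:ℤ) ∣ p := by
    have : (8:ℤ) ^ 2 ∣ p ^ 2 := ⟨c * n ^ 3, by rw [hp]; ring⟩
    exact (Int.pow_dvd_pow_iff (by norm_num)).mp this
  obtain ⟨p', rfl⟩ := h8
  have hgv : g % 2 = 0 ∧ v % 2 = 0 := by
    have hpar : (g ^ 2 + g * v - k * v ^ 2) % 2 = 0 := by
      rw [hn, show z * (4 * n) = 2 * (2 * z * n) by ring]; omega
    obtain ⟨k', rfl⟩ : ∃ k', k = 2 * k' + 1 := ⟨k / 2, by omega⟩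
    rcases Int.emod_two_eq_zero_or_one g with hg | hg <;>
      rcases Int.emod_two_eq_zero_or_one v with hv | hv <;>
      simp [hg, hv, pow_two, Int.sub_emod, Int.add_emod, Int.mul_emod] at hpar ⊢
  obtain ⟨g', rfl⟩ : ∃ n, g = 2 * n := ⟨g / 2, by omega⟩
  obtain ⟨v', rfl⟩ : ∃ n, v = 2 * n := ⟨v / 2, by omega⟩
  refine obs2 k n y p' 0 g' v' hk hn2 rfl hy ?_
  linarith

theorem pt_mod3 (d x w y : ℤ) (hd : d % 3 ≠ 0) (h : IsPt d x w y) :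
    y % 3 ≠ 0 ∧ (x ^ 2 + x * w + w ^ 2) % 3 ≠ 0 := by
  obtain ⟨⟨s, t, hst⟩, h⟩ := h
  have key : ∀ d x w y s t : ZMod 3, d ≠ 0 → s * x + t * w = 1 →
      d * y ^ 2 = x ^ 6 + 2 * x ^ 5 * w + 5 * x ^ 4 * w ^ 2 + 10 * x ^ 3 * w ^ 3
    + 10 * x ^ 2 * w ^ 4 + 4 * x * w ^ 5 + w ^ 6 → (y = 0 ↔ x ^ 2 + x * w + w ^ 2 = 0) := by
    decide +kernel
  have key9 : ∀ d x w y : ZMod 9, 3 * (x ^ 2 + x * w + w ^ 2) = 0 → 3 * y = 0 →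
      d * y ^ 2 = x ^ 6 + 2 * x ^ 5 * w + 5 * x ^ 4 * w ^ 2 + 10 * x ^ 3 * w ^ 3
    + 10 * x ^ 2 * w ^ 4 + 4 * x * w ^ 5 + w ^ 6 → 3 * x = 0 := by decide +kernel
  have hc : ∀ a : ℤ, (a : ZMod 3) = 0 ↔ a % 3 = 0 := fun a => by
    rw [ZMod.intCast_zmod_eq_zero_iff_dvd]; exact ⟨Int.emod_eq_zero_of_dvd, Int.dvd_of_emod_eq_zero⟩
  have hc9 : ∀ a : ℤ, a % 3 = 0 ↔ (3 : ZMod 9) * a = 0 := fun a => by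
    have := ZMod.intCast_zmod_eq_zero_iff_dvd (3 * a) 9
    push_cast at this; rw [this]; omega
  have h3 := congrArg (Int.cast : ℤ → ZMod 3) h
  have h9 := congrArg (Int.cast : ℤ → ZMod 9) h
  have hst3 := congrArg (Int.cast : ℤ → ZMod 3) hst
  push_cast at h3 h9 hst3
  have k1 := key d x w y s t (by rw [Ne, hc]; exact hd) hst3 h3
  have k1' : y % 3 = 0 ↔ (x ^ 2 + x * w + w ^ 2) % 3 = 0 := by
    rw [← hc, ← hc]; push_cast; exact k1
  have main : ¬ (y % 3 = 0) := by
    intro hy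
    have hz := k1'.mp hy
    have hx9 := key9 d x w y (by have := (hc9 _).mp hz; push_cast at this; exact this)
      ((hc9 y).mp hy) h9
    have hx := (hc9 x).mpr hx9
    have hz' : (w ^ 2) % 3 = 0 := by
      obtain ⟨x', rfl⟩ := Int.dvd_of_emod_eq_zero hx
      have : w ^ 2 = (3 * x') ^ 2 + 3 * x' * w + w ^ 2 - 3 * (3 * x' ^ 2 + x' * w) := by ring
      rw [this]; omega
    have hw : (3:ℤ) ∣ w := Int.Prime.dvd_pow' (by norm_num) (Int.dvd_of_emod_eq_zero hz')
    have : (3:ℤ) ∣ 1 := by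
      rw [← hst]; exact dvd_add (Dvd.dvd.mul_left (Int.dvd_of_emod_eq_zero hx) _) (Dvd.dvd.mul_left hw _)
    omega
  exact ⟨main, fun h => main (k1'.mpr h)⟩

theorem pt_mod2 (d x w y : ℤ) (h : IsPt d x w y) :
    y % 2 = 1 ∧ (x ^ 2 + x * w + w ^ 2) % 2 = 1 ∧ (x ^ 3 + 3 * x ^ 2 * w - w ^ 3) % 2 = 1 := by
  obtain ⟨⟨s, t, hst⟩, h⟩ := h
  have key : ∀ d x w y s t : ZMod 2, s * x + t * w = 1 →
      d * y ^ 2 = x ^ 6 + 2 * x ^ 5 * w + 5 * x ^ 4 * w ^ 2 + 10 * x ^ 3 * w ^ 3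
    + 10 * x ^ 2 * w ^ 4 + 4 * x * w ^ 5 + w ^ 6 → y = 1 ∧ x ^ 2 + x * w + w ^ 2 = 1 ∧
     x ^ 3 + 3 * x ^ 2 * w - w ^ 3 = 1 := by
    decide +kernel
  have hc : ∀ a : ℤ, (a : ZMod 2) = 1 ↔ a % 2 = 1 := fun a => by
    have := ZMod.intCast_eq_intCast_iff a 1 2
    push_cast at this; rw [this]; rfl
  have h3 := congrArg (Int.cast : ℤ → ZMod 2) h
  have hst3 := congrArg (Int.cast : ℤ → ZMod 2) hst
  push_cast at h3 hst3
  have := key d x w y s t hst3 h3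
  rw [← hc, ← hc, ← hc]; push_cast; exact this

theorem pt_zpos (d x w y : ℤ) (h : IsPt d x w y) : 0 < x ^ 2 + x * w + w ^ 2 := by
  have := (pt_mod2 d x w y h).2.1
  have h2 : 0 ≤ x ^ 2 + x * w + w ^ 2 := by nlinarith [sq_nonneg (x + w), sq_nonneg x, sq_nonneg w]
  omega

theorem pt_cop (d x w y : ℤ) (h : IsPt d x w y) (n : ℤ) (hn : ∀ p : ℤ, Prime p → p ∣ 3 → ¬ p ∣ n)
    (hnz : n ∣ x ^ 2 + x * w + w ^ 2) : IsCoprime n y := by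
  have h1 := pt_mod2 d x w y h
  apply isCoprime_of_prime_dvd
  · rintro ⟨-, hy⟩; rw [hy] at h1; omega
  · intro p hp hpn hpy
    have hpz := hpn.trans hnz
    have hid : (x ^ 3 + 3 * x ^ 2 * w - w ^ 3) ^ 2 + 3 * (d * y ^ 2) =
        4 * (x ^ 2 + x * w + w ^ 2) ^ 3 := by rw [h.2]; ring
    have hP : p ∣ x ^ 3 + 3 * x ^ 2 * w - w ^ 3 := by
      apply hp.dvd_of_dvd_pow (n := 2)
      have : (x ^ 3 + 3 * x ^ 2 * w - w ^ 3) ^ 2 = 4 * (x ^ 2 + x * w + w ^ 2) ^ 3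
        - 3 * d * y * y := by linear_combination hid
      rw [this]
      exact dvd_sub (Dvd.dvd.mul_left (dvd_pow hpz (by norm_num)) _) (Dvd.dvd.mul_left hpy _)
    have h3 : p ∣ 3 * (x * (x * w)) := by
      have : 3 * (x * (x * w)) = (x ^ 3 + 3 * x ^ 2 * w - w ^ 3) - (x - w) * (x ^ 2 + x * w + w ^ 2) := by
        ring
      rw [this]; exact dvd_sub hP (Dvd.dvd.mul_left hpz _)
    have hnot : p ∣ x → p ∣ w → False := fun ha hb => by
      obtain ⟨s, t, hst⟩ := h.1
      have : p ∣ 1 := by rw [← hst]; exact dvd_add (Dvd.dvd.mul_left ha _) (Dvd.dvd.mul_left hb _)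
      exact hp.not_isUnit (isUnit_of_dvd_one this)
    have hx : p ∣ x → False := fun ha => by
      refine hnot ha (hp.dvd_of_dvd_pow (n := 2) ?_)
      have : w ^ 2 = (x ^ 2 + x * w + w ^ 2) - x * (x + w) := by ring
      rw [this]; exact dvd_sub hpz (Dvd.dvd.mul_right ha _)
    have hw : p ∣ w → False := fun ha => by
      refine hnot (hp.dvd_of_dvd_pow (n := 2) ?_) ha
      have : x ^ 2 = (x ^ 2 + x * w + w ^ 2) - w * (x + w) := by ring
      rw [this]; exact dvd_sub hpz (Dvd.dvd.mul_right ha _)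
    rcases hp.dvd_or_dvd h3 with h | h
    · exact hn p hp h hpn
    · rcases hp.dvd_or_dvd h with h | h
      · exact hx h
      · rcases hp.dvd_or_dvd h with h | h
        · exact hx h
        · exact hw h


theorem prime_dvd_three_not (n : ℤ) (hn : n % 3 ≠ 0) (p : ℤ) (hp : Prime p) (h3 : p ∣ 3) : ¬ p ∣ n := by
  intro h
  have h3' : Prime (3:ℤ) := Int.prime_three
  have := (hp.associated_of_dvd h3' h3).symm.dvd.trans h
  omega

theorem case1 (d k x w y : ℤ) (hd0 : 0 < d) (hd : d % 3 ≠ 0) (hk : 1 + 4 * k = -3 * d)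
    (h : IsPt d x w y) : ∃ A m p q g v : ℤ, 2 * A + y = x ^ 3 + 3 * x ^ 2 * w - w ^ 3 ∧
      0 < m ∧ m ^ 2 ≤ d ∧ g ^ 2 + g * v - k * v ^ 2 = (x ^ 2 + x * w + w ^ 2) * m ∧
      p ^ 2 + p * q - k * q ^ 2 = 1 * m ^ 3 ∧
      (m : QO k) ^ 3 * ⟨A, y⟩ = ⟨p, q⟩ * (⟨g, v⟩ : QO k) ^ 3 := by
  obtain ⟨h1, h2, h3⟩ := pt_mod2 d x w y h
  obtain ⟨h4, h5⟩ := pt_mod3 d x w y hd h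
  have hcop := pt_cop d x w y h _ (prime_dvd_three_not _ h5) dvd_rfl
  obtain ⟨A, hA⟩ : ∃ A, 2 * A + y = x ^ 3 + 3 * x ^ 2 * w - w ^ 3 :=
    ⟨(x ^ 3 + 3 * x ^ 2 * w - w ^ 3 - y) / 2, by omega⟩
  have hN : A ^ 2 + A * y - k * y ^ 2 = 1 * (x ^ 2 + x * w + w ^ 2) ^ 3 := by
    have e1 : 4 * (A ^ 2 + A * y - k * y ^ 2) = (2 * A + y) ^ 2 - (1 + 4 * k) * y ^ 2 := by ring
    have e2 : (x ^ 3 + 3 * x ^ 2 * w - w ^ 3) ^ 2 + 3 * (d * y ^ 2) =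
        4 * (x ^ 2 + x * w + w ^ 2) ^ 3 := by rw [h.2]; ring
    rw [hA, hk] at e1
    linarith
  obtain ⟨m, p, q, g, v, hm, hm2, hn, hp, hh⟩ :=
    imag_descent k A y 1 _ (by omega) (pt_zpos d x w y h) hcop hN
  exact ⟨A, m, p, q, g, v, hA, hm, by omega, hn, hp, hh⟩

theorem case2 (d e k x w y : ℤ) (hd0 : 0 < e) (hd : d = 3 * e) (hk : 1 + 4 * k = -e)
    (h : IsPt d x w y) : ∃ u z A m p q g v : ℤ, x = w + 3 * u ∧ w % 3 ≠ 0 ∧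
      z = w ^ 2 + 3 * u * w + 3 * u ^ 2 ∧
      2 * A + y = w ^ 3 + 9 * u * w ^ 2 + 18 * u ^ 2 * w + 9 * u ^ 3 ∧
      0 < m ∧ 3 * m ^ 2 ≤ e ∧ g ^ 2 + g * v - k * v ^ 2 = z * m ∧
      p ^ 2 + p * q - k * q ^ 2 = 3 * m ^ 3 ∧
      (m : QO k) ^ 3 * ⟨A, y⟩ = ⟨p, q⟩ * (⟨g, v⟩ : QO k) ^ 3 := by
  obtain ⟨h1, h2, h3⟩ := pt_mod2 d x w y h
  have hmod : (x - w) % 3 = 0 ∧ w % 3 ≠ 0 := by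
    obtain ⟨⟨s, t, hst⟩, h⟩ := h
    have key : ∀ x w y s t e : ZMod 3, s * x + t * w = 1 →
        3 * e * y ^ 2 = x ^ 6 + 2 * x ^ 5 * w + 5 * x ^ 4 * w ^ 2 + 10 * x ^ 3 * w ^ 3
      + 10 * x ^ 2 * w ^ 4 + 4 * x * w ^ 5 + w ^ 6 → x - w = 0 ∧ w ≠ 0 := by
      decide +kernel
    have hc : ∀ a : ℤ, (a : ZMod 3) = 0 ↔ a % 3 = 0 := fun a => by
      rw [ZMod.intCast_zmod_eq_zero_iff_dvd]
      exact ⟨Int.emod_eq_zero_of_dvd, Int.dvd_of_emod_eq_zero⟩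
    rw [hd] at h
    have h3 := congrArg (Int.cast : ℤ → ZMod 3) h
    have hst3 := congrArg (Int.cast : ℤ → ZMod 3) hst
    push_cast at h3 hst3
    have := key x w y s t e hst3 h3
    rw [Ne, ← hc, ← hc]; push_cast; exact this
  obtain ⟨u, hu⟩ : ∃ u, x = w + 3 * u := ⟨(x - w) / 3, by omega⟩
  have hz3 : x ^ 2 + x * w + w ^ 2 = 3 * (w ^ 2 + 3 * u * w + 3 * u ^ 2) := by rw [hu]; ring
  have hP3 : x ^ 3 + 3 * x ^ 2 * w - w ^ 3 =
    3 * (w ^ 3 + 9 * u * w ^ 2 + 18 * u ^ 2 * w + 9 * u ^ 3) := by rw [hu]; ring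
  have hzpos := pt_zpos d x w y h
  have hz3' : (w ^ 2 + 3 * u * w + 3 * u ^ 2) % 3 ≠ 0 := by
    intro h0
    have : (3:ℤ) ∣ w ^ 2 := by
      have : w ^ 2 = (w ^ 2 + 3 * u * w + 3 * u ^ 2) - 3 * (u * w + u ^ 2) := by ring
      rw [this]; omega
    have := Int.Prime.dvd_pow' (p := 3) (by norm_num) this
    omega
  have hcop := pt_cop d x w y h _ (prime_dvd_three_not _ hz3') ⟨3, by rw [hz3]; ring⟩
  have e2 : (x ^ 3 + 3 * x ^ 2 * w - w ^ 3) ^ 2 + 3 * (d * y ^ 2) =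
        4 * (x ^ 2 + x * w + w ^ 2) ^ 3 := by rw [h.2]; ring
  rw [hz3] at h2 hzpos
  rw [hP3] at h3
  rw [hz3, hP3, hd] at e2
  set z := w ^ 2 + 3 * u * w + 3 * u ^ 2 with hz
  set P := w ^ 3 + 9 * u * w ^ 2 + 18 * u ^ 2 * w + 9 * u ^ 3 with hP
  obtain ⟨A, hA⟩ : ∃ A, 2 * A + y = P := ⟨(P - y) / 2, by omega⟩
  have hN : A ^ 2 + A * y - k * y ^ 2 = 3 * z ^ 3 := by
    have e1 : 4 * (A ^ 2 + A * y - k * y ^ 2) = (2 * A + y) ^ 2 - (1 + 4 * k) * y ^ 2 := by ring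
    rw [hA, hk] at e1
    linarith
  obtain ⟨m, p, q, g, v, hm, hm2, hn, hp, hh⟩ :=
    imag_descent k A y 3 z (by omega) (by omega) hcop hN
  exact ⟨u, z, A, m, p, q, g, v, hu, hmod.2, rfl, hA, hm, by omega, hn, hp, hh⟩

/-- Finite enumeration of the norm equation. -/
theorem enum_mu (D c m p q k : ℤ) (M Q : ℕ) (S : ℕ → ℕ → Prop) (hD : 1 + 4 * k = -D)
    (hD0 : 0 < D) (hm : 0 < m) (hM : m < M) (hp : p ^ 2 + p * q - k * q ^ 2 = c * m ^ 3)
    (hQ : 4 * c * M ^ 3 < D * Q ^ 2) (hc : 0 ≤ c)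
    (check : ∀ m < M, ∀ q < Q, m = 0 ∨ (4 * c.natAbs * m ^ 3 < D.natAbs * q ^ 2) ∨ S m q ∨
       ¬ IsSquare (4 * c.natAbs * m ^ 3 - D.natAbs * q ^ 2)) :
    S m.natAbs q.natAbs := by
  have e : (2 * p + q) ^ 2 + D * q ^ 2 = 4 * c * m ^ 3 := by
    linear_combination 4 * hp + q ^ 2 * hD
  have hq : q.natAbs < Q := by
    by_contra hcon
    push Not at hcon
    have h1 : (Q:ℤ) ≤ |q| := by rw [Int.abs_eq_natAbs]; exact_mod_cast hcon
    have h2 : (Q:ℤ) ^ 2 ≤ q ^ 2 := by rw [← sq_abs q]; gcongr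
    have h3 : m ^ 3 ≤ (M:ℤ) ^ 3 := by gcongr
    have h4 : D * Q ^ 2 ≤ D * q ^ 2 := by gcongr
    have h5 : 4 * c * m ^ 3 ≤ 4 * c * M ^ 3 := by gcongr
    nlinarith [sq_nonneg (2 * p + q)]
  have hmM : m.natAbs < M := by omega
  obtain ⟨m', rfl⟩ := Int.eq_ofNat_of_zero_le hm.le
  obtain ⟨c', rfl⟩ := Int.eq_ofNat_of_zero_le hc
  obtain ⟨D', rfl⟩ := Int.eq_ofNat_of_zero_le hD0.le
  have e' : (2 * p + q).natAbs ^ 2 + D' * q.natAbs ^ 2 = 4 * c' * m' ^ 3 := by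
    zify; rw [sq_abs, sq_abs]; exact e
  rcases check _ hmM _ hq with h | h | h | h
  · omega
  · simp at h; omega
  · exact h
  · exfalso; apply h
    refine ⟨(2 * p + q).natAbs, ?_⟩
    simp only [Int.natAbs_natCast] at *
    rw [← e', ← sq]; omega

def good (m q : ℕ) : Prop := (m % 2 = 1 ∧ q % 2 = 0) ∨ (q % 3 = 0 ∧ m % 3 ≠ 0) ∨ (q = 0 ∧ m % 8 = 4)
def good2 (m q : ℕ) : Prop := (m % 2 = 1 ∧ q % 2 = 0) ∨ (q = 0 ∧ m % 8 = 4)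

instance (m q : ℕ) : Decidable (good m q) := by unfold good; infer_instance
instance (m q : ℕ) : Decidable (good2 m q) := by unfold good2; infer_instance

theorem good_false (k z m A y p q g v : ℤ) (hk : k % 2 = 1) (hk3 : k % 3 = 2) (hm : 0 < m)
    (hy : y % 2 = 1) (hy3 : y % 3 ≠ 0) (hn : g ^ 2 + g * v - k * v ^ 2 = z * m)
    (hp : p ^ 2 + p * q - k * q ^ 2 = 1 * m ^ 3)
    (h : (m : QO k) ^ 3 * ⟨A, y⟩ = ⟨p, q⟩ * (⟨g, v⟩ : QO k) ^ 3)
    (hg : good m.natAbs q.natAbs) : False := by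
  have h2 := (cube_comp _ _ _ _ _ _ _ _ h).2
  rcases hg with ⟨a, b⟩ | ⟨a, b⟩ | ⟨a, b⟩
  · exact obs2 k m y p q g v hk (by omega) (by omega) hy h2
  · exact obs3 k m y p q g v hk3 (by omega) (by omega) hy3 h2
  · have hq : q = 0 := by omega
    rw [hq] at h2 hp
    exact obs4 k 1 z m y p g v hk (by omega) hy hn (by linarith) (by linarith)

theorem good2_false (k z m A y p q g v : ℤ) (hk : k % 2 = 1) (hm : 0 < m)
    (hy : y % 2 = 1) (hn : g ^ 2 + g * v - k * v ^ 2 = z * m)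
    (hp : p ^ 2 + p * q - k * q ^ 2 = 3 * m ^ 3)
    (h : (m : QO k) ^ 3 * ⟨A, y⟩ = ⟨p, q⟩ * (⟨g, v⟩ : QO k) ^ 3)
    (hg : good2 m.natAbs q.natAbs) : False := by
  have h2 := (cube_comp _ _ _ _ _ _ _ _ h).2
  rcases hg with ⟨a, b⟩ | ⟨a, b⟩
  · exact obs2 k m y p q g v hk (by omega) (by omega) hy h2
  · have hq : q = 0 := by omega
    rw [hq] at h2 hp
    exact obs4 k 3 z m y p g v hk (by omega) hy hn (by linarith) (by linarith)

theorem easy1 (d k : ℤ) (M : ℕ) (hd0 : 0 < d) (hd : d % 3 ≠ 0) (hk : 1 + 4 * k = -3 * d)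
    (hk2 : k % 2 = 1) (hk3 : k % 3 = 2) (hd1 : d < M ^ 2) (hM90 : M ≤ 90) (hd2 : 5000 < d)
    (check : ∀ m < M, ∀ q < 15, m = 0 ∨ (4 * 1 * m ^ 3 < (3 * d).natAbs * q ^ 2) ∨ good m q ∨
       ¬ IsSquare (4 * 1 * m ^ 3 - (3 * d).natAbs * q ^ 2)) (x w y : ℤ) (h : IsPt d x w y) :
    False := by
  obtain ⟨A, m, p, q, g, v, hA, hm, hm2, hn, hp, hh⟩ := case1 d k x w y hd0 hd hk h
  have hQ : 4 * 1 * (M:ℤ) ^ 3 < 3 * d * (15:ℕ) ^ 2 := by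
    have h1 : (M:ℤ) ≤ 90 := by exact_mod_cast hM90
    have h2 : (M:ℤ) ^ 3 ≤ 90 ^ 3 := by gcongr
    push_cast; linarith
  have := enum_mu (3 * d) 1 m p q k M 15 good (by linarith) (by linarith) hm
    (by nlinarith) hp hQ (by norm_num) check
  exact good_false k _ m A y p q g v hk2 hk3 hm (pt_mod2 d x w y h).1 (pt_mod3 d x w y hd h).1 hn hp hh this

theorem no_pt_5281 (x w y : ℤ) (h : IsPt 5281 x w y) : False :=
  easy1 5281 (-3961) 73 (by norm_num) (by norm_num) (by norm_num) (by norm_num) (by norm_num) (by norm_num)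
    (by norm_num) (by norm_num) (by decide +kernel) x w y h
theorem no_pt_6217 (x w y : ℤ) (h : IsPt 6217 x w y) : False :=
  easy1 6217 (-4663) 79 (by norm_num) (by norm_num) (by norm_num) (by norm_num) (by norm_num) (by norm_num)
    (by norm_num) (by norm_num) (by decide +kernel) x w y h
theorem no_pt_7057 (x w y : ℤ) (h : IsPt 7057 x w y) : False :=
  easy1 7057 (-5293) 85 (by norm_num) (by norm_num) (by norm_num) (by norm_num) (by norm_num) (by norm_num)
    (by norm_num) (by norm_num) (by decide +kernel) x w y h
theorem no_pt_7321 (x w y : ℤ) (h : IsPt 7321 x w y) : False :=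
  easy1 7321 (-5491) 86 (by norm_num) (by norm_num) (by norm_num) (by norm_num) (by norm_num) (by norm_num)
    (by norm_num) (by norm_num) (by decide +kernel) x w y h

theorem no_pt_681 (x w y : ℤ) (h : IsPt 681 x w y) : False := by
  obtain ⟨u, z, A, m, p, q, g, v, hu, hw, hz, hA, hm, hm2, hn, hp, hh⟩ :=
    case2 681 227 (-57) x w y (by norm_num) (by norm_num) (by norm_num) h
  have := enum_mu 227 3 m p q (-57) 9 7 good2 (by norm_num) (by norm_num) hm
    (by push_cast; nlinarith) hp (by norm_num) (by norm_num) (by decide +kernel)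
  exact good2_false _ z m A y p q g v (by norm_num) hm (pt_mod2 _ x w y h).1 hn hp hh this

theorem no_pt_1761 (x w y : ℤ) (h : IsPt 1761 x w y) : False := by
  obtain ⟨u, z, A, m, p, q, g, v, hu, hw, hz, hA, hm, hm2, hn, hp, hh⟩ :=
    case2 1761 587 (-147) x w y (by norm_num) (by norm_num) (by norm_num) h
  have := enum_mu 587 3 m p q (-147) 14 8 good2 (by norm_num) (by norm_num) hm
    (by push_cast; nlinarith) hp (by norm_num) (by norm_num) (by decide +kernel)
  exact good2_false _ z m A y p q g v (by norm_num) hm (pt_mod2 _ x w y h).1 hn hp hh this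


abbrev QF (ℓ : ℕ) (κ : ZMod ℓ) := QuadraticAlgebra (ZMod ℓ) κ 1

/-- Cubic residue test at an inert prime `ℓ = 3 * e - 1`. -/
theorem trit_test (ℓ e : ℕ) [Fact ℓ.Prime] (κ : ZMod ℓ)
    (hτ : (⟨0, 1⟩ : QuadraticAlgebra (ZMod ℓ) κ 1) ^ ℓ = ⟨1, -1⟩) (he : 3 * e = ℓ + 1)
    (a b p q g v m : ZMod ℓ) (hm : m ≠ 0)
    (h : (⟨m, 0⟩ : QuadraticAlgebra (ZMod ℓ) κ 1) ^ 3 * ⟨a, b⟩ = ⟨p, q⟩ * ⟨g, v⟩ ^ 3) :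
    (((⟨a, b⟩ : QuadraticAlgebra (ZMod ℓ) κ 1) * ⟨p + q, -q⟩) ^ e).im = 0 := by
  have hC : ∀ c : ZMod ℓ, (⟨c, 0⟩ : QF ℓ κ) = algebraMap (ZMod ℓ) (QF ℓ κ) c := fun c => by
    ext <;> simp [QuadraticAlgebra.algebraMap_eq]
  have : CharP (QF ℓ κ) ℓ := charP_of_injective_algebraMap
    (R := ZMod ℓ) (A := QF ℓ κ) (fun x y hxy => by
      rw [← hC, ← hC] at hxy; exact congrArg QuadraticAlgebra.re hxy) ℓ
  have hmul : ∀ a b c d : ZMod ℓ, (⟨a, b⟩ : QF ℓ κ) * ⟨c, d⟩ =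
      ⟨a * c + κ * b * d, a * d + b * c + b * d⟩ := fun a b c d => by
    ext <;> simp
  have hadd : ∀ a b c d : ZMod ℓ, (⟨a, b⟩ : QF ℓ κ) + ⟨c, d⟩ = ⟨a + c, b + d⟩ := fun a b c d => by
    ext <;> simp
  have hfrob : (⟨g, v⟩ : QF ℓ κ) ^ ℓ = ⟨g + v, -v⟩ := by
    have : (⟨g, v⟩ : QF ℓ κ) = ⟨g, 0⟩ + ⟨v, 0⟩ * ⟨0, 1⟩ := by rw [hmul, hadd]; simp
    rw [this, add_pow_char, mul_pow, hτ, hC, hC, ← map_pow, ← map_pow, ZMod.pow_card,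
      ZMod.pow_card, ← hC, ← hC, hmul, hadd]
    simp
  have hγ : (⟨g, v⟩ : QF ℓ κ) ^ (3 * e) = algebraMap (ZMod ℓ) (QF ℓ κ) (g ^ 2 + g * v - κ * v ^ 2) := by
    rw [he, pow_succ, hfrob, hmul, ← hC]
    ext
    · simp; ring
    · simp; ring
  have hμ : (⟨p, q⟩ : QF ℓ κ) * ⟨p + q, -q⟩ = algebraMap (ZMod ℓ) (QF ℓ κ) (p ^ 2 + p * q - κ * q ^ 2) := by
    rw [hmul, ← hC]
    ext
    · simp; ring
    · simp; ring
  have key : algebraMap (ZMod ℓ) (QF ℓ κ) (m ^ (3 * e)) * ((⟨a, b⟩ : QF ℓ κ) * ⟨p + q, -q⟩) ^ e =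
      algebraMap (ZMod ℓ) (QF ℓ κ) ((p ^ 2 + p * q - κ * q ^ 2) ^ e * (g ^ 2 + g * v - κ * v ^ 2)) := by
    rw [map_mul, map_pow _ _ e, ← hμ, ← hγ, map_pow, ← hC m]
    calc (⟨m, 0⟩ : QF ℓ κ) ^ (3 * e) * ((⟨a, b⟩ : QF ℓ κ) * ⟨p + q, -q⟩) ^ e
        = ((⟨m, 0⟩ : QF ℓ κ) ^ 3 * ⟨a, b⟩) ^ e * ⟨p + q, -q⟩ ^ e := by
          rw [mul_pow, mul_pow, pow_mul]; ring
      _ = _ := by rw [h, mul_pow, mul_pow, pow_mul]; ring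
  have k2 := congrArg QuadraticAlgebra.im key
  rw [← hC, ← hC] at k2
  generalize (((⟨a, b⟩ : QF ℓ κ) * ⟨p + q, -q⟩) ^ e) = X at k2 ⊢
  simp at k2
  rcases k2 with h | h
  · exact absurd h.1 hm
  · exact h

/-- Transport of a cube equation to a quadratic algebra over `ZMod ℓ`. -/
theorem cube_map (k : ℤ) (ℓ : ℕ) (m A y p q g v : ℤ)
    (h : (m : QO k) ^ 3 * ⟨A, y⟩ = ⟨p, q⟩ * (⟨g, v⟩ : QO k) ^ 3) :
    (⟨m, 0⟩ : QuadraticAlgebra (ZMod ℓ) k 1) ^ 3 * ⟨A, y⟩ = ⟨p, q⟩ * ⟨g, v⟩ ^ 3 := by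
  obtain ⟨φ, hφ⟩ := exists_evalHom (R := QuadraticAlgebra (ZMod ℓ) k 1) k ⟨0, 1⟩
    (by ext <;> simp)
  have hφ' : ∀ a b : ℤ, φ ⟨a, b⟩ = ⟨a, b⟩ := fun a b => by rw [hφ]; ext <;> simp
  have := congrArg φ h
  rw [map_mul, map_mul, map_pow, map_pow, map_intCast, hφ', hφ', hφ'] at this
  rw [← this]
  congr 2

abbrev Q23 := QuadraticAlgebra (ZMod 23) ((-111 : ℤ) : ZMod 23) 1
instance : Fact (Nat.Prime 23) := ⟨by norm_num⟩
theorem loc23_a : ∀ x y : ZMod 23, 1329 * y ^ 2 = x ^ 6 + 2 * x ^ 5 + 5 * x ^ 4 + 10 * x ^ 3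
    + 10 * x ^ 2 + 4 * x + 1 →
    (((⟨(x ^ 3 + 3 * x ^ 2 - 1 - 3 * y) * 4, y⟩ : Q23) * (⟨36, -3⟩ : Q23)) ^ 8).im ≠ 0 ∧
    (((⟨(x ^ 3 + 3 * x ^ 2 - 1 - 3 * y) * 4, y⟩ : Q23) * (⟨33, 3⟩ : Q23)) ^ 8).im ≠ 0 ∧
    (((⟨(x ^ 3 + 3 * x ^ 2 - 1 - 3 * y) * 4, y⟩ : Q23) * (⟨-36, 3⟩ : Q23)) ^ 8).im ≠ 0 ∧
    (((⟨(x ^ 3 + 3 * x ^ 2 - 1 - 3 * y) * 4, y⟩ : Q23) * (⟨-33, -3⟩ : Q23)) ^ 8).im ≠ 0 := by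
  decide +kernel

theorem loc23_b : ∀ y : ZMod 23, 1329 * y ^ 2 = 1 →
    (((⟨(1 - 3 * y) * 4, y⟩ : Q23) * (⟨36, -3⟩ : Q23)) ^ 8).im ≠ 0 ∧
    (((⟨(1 - 3 * y) * 4, y⟩ : Q23) * (⟨33, 3⟩ : Q23)) ^ 8).im ≠ 0 ∧
    (((⟨(1 - 3 * y) * 4, y⟩ : Q23) * (⟨-36, 3⟩ : Q23)) ^ 8).im ≠ 0 ∧
    (((⟨(1 - 3 * y) * 4, y⟩ : Q23) * (⟨-33, -3⟩ : Q23)) ^ 8).im ≠ 0 := by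
  decide +kernel

theorem cube_scale (ℓ : ℕ) (κ t m a b p q g v : ZMod ℓ)
    (h : (⟨m, 0⟩ : QF ℓ κ) ^ 3 * ⟨a, b⟩ = ⟨p, q⟩ * ⟨g, v⟩ ^ 3) :
    (⟨m, 0⟩ : QF ℓ κ) ^ 3 * ⟨t ^ 3 * a, t ^ 3 * b⟩ = ⟨p, q⟩ * ⟨t * g, t * v⟩ ^ 3 := by
  have e1 : (⟨t ^ 3 * a, t ^ 3 * b⟩ : QF ℓ κ) = t ^ 3 • ⟨a, b⟩ := by ext <;> simp
  have e2 : (⟨t * g, t * v⟩ : QF ℓ κ) = t • ⟨g, v⟩ := by ext <;> simp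
  rw [e1, e2, smul_pow, mul_smul_comm, mul_smul_comm, h]

theorem chart (ℓ : ℕ) [Fact ℓ.Prime] (d x w y : ℤ) (h : IsPt d x w y) :
    ∃ t : ZMod ℓ, t ≠ 0 ∧ (t * w = 1 ∨ (t * w = 0 ∧ t * x = 1)) ∧
      (d : ZMod ℓ) * (t ^ 3 * y) ^ 2 = (t * x) ^ 6 + 2 * (t * x) ^ 5 * (t * w)
        + 5 * (t * x) ^ 4 * (t * w) ^ 2 + 10 * (t * x) ^ 3 * (t * w) ^ 3
        + 10 * (t * x) ^ 2 * (t * w) ^ 4 + 4 * (t * x) * (t * w) ^ 5 + (t * w) ^ 6 := by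
  obtain ⟨⟨a, b, hab⟩, h⟩ := h
  have h1 := congrArg (Int.cast : ℤ → ZMod ℓ) h
  have h2 := congrArg (Int.cast : ℤ → ZMod ℓ) hab
  push_cast at h1 h2
  have key : ∀ t : ZMod ℓ, (d : ZMod ℓ) * (t ^ 3 * y) ^ 2 = (t * x) ^ 6 + 2 * (t * x) ^ 5 * (t * w)
        + 5 * (t * x) ^ 4 * (t * w) ^ 2 + 10 * (t * x) ^ 3 * (t * w) ^ 3
        + 10 * (t * x) ^ 2 * (t * w) ^ 4 + 4 * (t * x) * (t * w) ^ 5 + (t * w) ^ 6 := by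
    intro t; linear_combination t ^ 6 * h1
  by_cases hw : (w : ZMod ℓ) = 0
  · have hx : (x : ZMod ℓ) ≠ 0 := by
      intro hx; rw [hx, hw] at h2; simp at h2
    exact ⟨(x : ZMod ℓ)⁻¹, inv_ne_zero hx, Or.inr ⟨by rw [hw]; simp, inv_mul_cancel₀ hx⟩, key _⟩
  · exact ⟨(w : ZMod ℓ)⁻¹, inv_ne_zero hw, Or.inl (inv_mul_cancel₀ hw), key _⟩

theorem no_pt_1329 (x w y : ℤ) (h : IsPt 1329 x w y) : False := by
  obtain ⟨u, z, A, m, p, q, g, v, hu, hw, hz, hA, hm, hm2, hn, hp, hh⟩ :=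
    case2 1329 443 (-111) x w y (by norm_num) (by norm_num) (by norm_num) h
  have := enum_mu 443 3 m p q (-111) 13 8 (fun m q => good2 m q ∨ (m = 9 ∧ q = 3))
    (by norm_num) (by norm_num) hm
    (by push_cast; nlinarith) hp (by norm_num) (by norm_num) (by decide +kernel)
  rcases this with hg | ⟨hm9, hq3⟩
  · exact good2_false _ z m A y p q g v (by norm_num) hm (pt_mod2 _ x w y h).1 hn hp hh hg
  have hm9' : m = 9 := by omega
  subst hm9'
  have hpq : (p = 33 ∧ q = 3) ∨ (p = -36 ∧ q = 3) ∨ (p = 36 ∧ q = -3) ∨ (p = -33 ∧ q = -3) := by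
    rcases Int.natAbs_eq q with hq | hq <;> rw [hq3] at hq <;> push_cast at hq <;> subst hq
    · have : (p - 33) * (p + 36) = 0 := by linear_combination hp
      rcases mul_eq_zero.mp this with h | h
      · left; omega
      · right; left; omega
    · have : (p - 36) * (p + 33) = 0 := by linear_combination hp
      rcases mul_eq_zero.mp this with h | h
      · right; right; left; omega
      · right; right; right; omega
  obtain ⟨t, ht, hch, hcur⟩ := chart 23 1329 x w y h
  have h1 := cube_map _ 23 _ _ _ _ _ _ _ hh
  have h2 := cube_scale 23 _ t _ _ _ _ _ _ _ h1
  have h3 := trit_test 23 8 _ (by decide +kernel) (by norm_num) _ _ _ _ _ _ _ (by decide) h2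
  have hAx : (t ^ 3 * A : ZMod 23) = ((t * x) ^ 3 + 3 * (t * x) ^ 2 * (t * w) - (t * w) ^ 3 - 3 * (t ^ 3 * y)) * 4 := by
    have e : 6 * A + 3 * y = x ^ 3 + 3 * x ^ 2 * w - w ^ 3 := by rw [hu]; linarith
    have e1 := congrArg (Int.cast : ℤ → ZMod 23) e
    push_cast at e1
    have h24 : (23 : ZMod 23) = 0 := by decide
    linear_combination (4 * t ^ 3) * e1 - (t ^ 3 * A) * h24
  rw [hAx] at h3
  have hmain : ∀ X W Y : ZMod 23, (W = 1 ∨ (W = 0 ∧ X = 1)) →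
      1329 * Y ^ 2 = X ^ 6 + 2 * X ^ 5 * W
        + 5 * X ^ 4 * W ^ 2 + 10 * X ^ 3 * W ^ 3
        + 10 * X ^ 2 * W ^ 4 + 4 * X * W ^ 5 + W ^ 6 →
    (((⟨(X ^ 3 + 3 * X ^ 2 * W - W ^ 3 - 3 * Y) * 4, Y⟩ : Q23) * (⟨36, -3⟩ : Q23)) ^ 8).im ≠ 0 ∧
    (((⟨(X ^ 3 + 3 * X ^ 2 * W - W ^ 3 - 3 * Y) * 4, Y⟩ : Q23) * (⟨33, 3⟩ : Q23)) ^ 8).im ≠ 0 ∧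
    (((⟨(X ^ 3 + 3 * X ^ 2 * W - W ^ 3 - 3 * Y) * 4, Y⟩ : Q23) * (⟨-36, 3⟩ : Q23)) ^ 8).im ≠ 0 ∧
    (((⟨(X ^ 3 + 3 * X ^ 2 * W - W ^ 3 - 3 * Y) * 4, Y⟩ : Q23) * (⟨-33, -3⟩ : Q23)) ^ 8).im ≠ 0 := by
    intro X W Y hc hcur
    rcases hc with rfl | ⟨rfl, rfl⟩
    · simp only [mul_one, one_pow] at hcur ⊢
      exact loc23_a X Y hcur
    · have := loc23_b Y (by simpa using hcur)
      simpa using this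
  obtain ⟨c1, c2, c3, c4⟩ := hmain _ _ _ hch (by simpa using hcur)
  rcases hpq with ⟨rfl, rfl⟩ | ⟨rfl, rfl⟩ | ⟨rfl, rfl⟩ | ⟨rfl, rfl⟩
  · apply c1; convert h3 using 5 <;> norm_num
  · apply c4; convert h3 using 5 <;> norm_num
  · apply c2; convert h3 using 5 <;> norm_num
  · apply c3; convert h3 using 5 <;> norm_num


theorem jac_num (D : ℕ) (hD : D % 8 = 1) (n : ℕ) :
    n ≠ 0 → (∀ q : ℕ, q.Prime → q ≠ 2 → q ∣ n → jacobiSym D q = 1) → jacobiSym n D = 1 := by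
  have hodd : Odd D := Nat.odd_iff.mpr (by omega)
  induction n using induction_on_primes with
  | zero => intro h; exact absurd rfl h
  | one => intro _ _; exact_mod_cast jacobiSym.one_left D
  | prime_mul p a hp ih =>
    intro h0 hq
    have ha : a ≠ 0 := fun h => h0 (by rw [h, mul_zero])
    have h1 := ih ha (fun q hq1 hq2 hq3 => hq q hq1 hq2 (Dvd.dvd.mul_left hq3 p))
    push_cast
    rw [jacobiSym.mul_left, h1, mul_one]
    by_cases hp2 : p = 2
    · subst hp2
      push_cast
      rw [jacobiSym.at_two hodd, ZMod.χ₈_nat_mod_eight, hD]; decide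
    · rw [← jacobiSym.quadratic_reciprocity_one_mod_four (by omega : D % 4 = 1)
        (hp.odd_of_ne_two hp2)]
      exact hq p hp hp2 (Dvd.intro _ rfl)

theorem jac_neg_one (D : ℕ) (hD : D % 4 = 1) : jacobiSym (-1) D = 1 := by
  have hodd : Odd D := Nat.odd_iff.mpr (by omega)
  rw [jacobiSym.at_neg_one hodd, ZMod.χ₄_nat_mod_four, hD]; decide

theorem jac_natAbs (D : ℕ) (hD : D % 4 = 1) (L : ℤ) : jacobiSym L D = jacobiSym L.natAbs D := by
  rcases Int.natAbs_eq L with h | h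
  · conv_lhs => rw [h]
  · conv_lhs => rw [h, ← neg_one_mul, jacobiSym.mul_left, jac_neg_one D hD, one_mul]

theorem jac_num_int (D : ℕ) (hD : D % 8 = 1) (L : ℤ) (hL : L ≠ 0)
    (h : ∀ q : ℕ, q.Prime → q ≠ 2 → (q:ℤ) ∣ L → jacobiSym D q = 1) : jacobiSym L D = 1 := by
  rw [jac_natAbs D (by omega)]
  exact jac_num D hD _ (Int.natAbs_ne_zero.mpr hL)
    (fun q h1 h2 h3 => h q h1 h2 (Int.natCast_dvd.mpr h3))

theorem jac_den (E : ℤ) (n : ℕ) :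
    n ≠ 0 → (∀ q : ℕ, q.Prime → q ∣ n → jacobiSym E q = 1) → jacobiSym E n = 1 := by
  induction n using induction_on_primes with
  | zero => intro h; exact absurd rfl h
  | one => intro _ _; exact jacobiSym.one_right E
  | prime_mul p a hp ih =>
    intro h0 hq
    have ha : a ≠ 0 := fun h => h0 (by rw [h, mul_zero])
    have h1 := ih ha (fun q hq1 hq3 => hq q hq1 (Dvd.dvd.mul_left hq3 p))
    have : NeZero p := ⟨hp.ne_zero⟩
    have : NeZero a := ⟨ha⟩
    rw [jacobiSym.mul_right, h1, mul_one]
    exact hq p hp (Dvd.intro _ rfl)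

theorem jac_sq (q : ℕ) (hq : q.Prime) (E Y Z : ℤ) (h : (q:ℤ) ∣ E * Y ^ 2 - Z ^ 2)
    (hZ : ¬ (q:ℤ) ∣ Z) : jacobiSym E q = 1 := by
  have : Fact q.Prime := ⟨hq⟩
  rw [← jacobiSym.legendreSym.to_jacobiSym]
  have hz : (Z : ZMod q) ≠ 0 := fun h0 => hZ ((ZMod.intCast_zmod_eq_zero_iff_dvd _ _).mp h0)
  have h1 : (E : ZMod q) * Y ^ 2 = Z ^ 2 := by
    have := (ZMod.intCast_zmod_eq_zero_iff_dvd _ q).mpr h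
    push_cast at this
    exact sub_eq_zero.mp this
  have hy : (Y : ZMod q) ≠ 0 := by
    intro h0; rw [h0] at h1; simp only [zero_mul, ne_eq, OfNat.ofNat_ne_zero, not_false_eq_true, zero_pow, mul_zero] at h1
    exact hz (pow_eq_zero_iff (two_ne_zero) |>.mp h1.symm)
  have hE : (E : ZMod q) ≠ 0 := by
    intro h0; rw [h0] at h1; simp only [zero_mul, ne_eq, OfNat.ofNat_ne_zero, not_false_eq_true, zero_pow, mul_zero] at h1
    exact hz (pow_eq_zero_iff (two_ne_zero) |>.mp h1.symm)
  rw [legendreSym.eq_one_iff q hE]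
  exact ⟨Z / Y, by field_simp; exact h1⟩

theorem cop_not_dvd {x w : ℤ} (h : IsCoprime x w) {q : ℕ} (hq : q.Prime) :
    ¬ ((q:ℤ) ∣ x ∧ (q:ℤ) ∣ w) := by
  rintro ⟨ha, hb⟩
  obtain ⟨s, t, hst⟩ := h
  have : (q:ℤ) ∣ 1 := by rw [← hst]; exact dvd_add (Dvd.dvd.mul_left ha _) (Dvd.dvd.mul_left hb _)
  have h1 := Int.eq_one_of_dvd_one (by positivity) this
  have := hq.one_lt
  omega

/-- For `L = m x - n w` with `F(n, m) = 33`, the symbol `(L | 11·971)` is trivial. -/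
theorem bit2913 (x w y : ℤ) (h : IsPt 2913 x w y) (m n : ℤ) (hm : m = 1 ∨ m = 2)
    (hc : n ^ 6 + 2 * n ^ 5 * m + 5 * n ^ 4 * m ^ 2 + 10 * n ^ 3 * m ^ 3
    + 10 * n ^ 2 * m ^ 4 + 4 * n * m ^ 5 + m ^ 6 = 33) (h11 : ¬ (11:ℤ) ∣ m * x - n * w) :
    jacobiSym (m * x - n * w) 10681 = 1 := by
  apply jac_num_int 10681 (by norm_num) _ (fun h => h11 (by rw [h]; exact dvd_zero _))
  intro q hq hq2 hqL
  have hq11 : q ≠ 11 := by rintro rfl; exact h11 (by exact_mod_cast hqL)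
  by_cases hq3 : q = 3
  · subst hq3; norm_num
  apply jac_sq q hq _ (3 * m ^ 3 * y) (33 * w ^ 3)
  · have e : (((10681:ℕ):ℤ) * (3 * m ^ 3 * y) ^ 2 - (33 * w ^ 3) ^ 2) =
      (m * x - n * w) * (33 * (m ^ 5 * x ^ 5 + m ^ 4 * n * w * x ^ 4 + m ^ 3 * n ^ 2 * w ^ 2 * x ^ 3
         + m ^ 2 * n ^ 3 * w ^ 3 * x ^ 2 + m * n ^ 4 * w ^ 4 * x + n ^ 5 * w ^ 5
        + 2 * w * m * (m ^ 4 * x ^ 4 + m ^ 3 * n * w * x ^ 3 + m ^ 2 * n ^ 2 * w ^ 2 * x ^ 2 + m * n ^ 3 * w ^ 3 * x + n ^ 4 * w ^ 4)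
        + 5 * w ^ 2 * m ^ 2 * (m ^ 3 * x ^ 3 + m ^ 2 * n * w * x ^ 2 + m * n ^ 2 * w ^ 2 * x + n ^ 3 * w ^ 3)
        + 10 * w ^ 3 * m ^ 3 * (m ^ 2 * x ^ 2 + m * n * w * x + n ^ 2 * w ^ 2)
        + 10 * w ^ 4 * m ^ 4 * (m * x + n * w) + 4 * w ^ 5 * m ^ 5)) := by
      push_cast
      linear_combination (33 * m ^ 6) * h.2 + (33 * w ^ 6) * hc
    rw [e]; exact Dvd.dvd.mul_right hqL _
  · have hqp := Nat.prime_iff_prime_int.mp hq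
    intro hd
    rcases hqp.dvd_or_dvd hd with h1 | h1
    · have : q ∣ 33 := by exact_mod_cast h1
      have h33 : q ∣ 3 * 11 := by simpa using this
      rcases (Nat.Prime.dvd_mul hq).mp h33 with h2 | h2
      · exact hq3 ((Nat.prime_dvd_prime_iff_eq hq (by norm_num)).mp h2)
      · exact hq11 ((Nat.prime_dvd_prime_iff_eq hq (by norm_num)).mp h2)
    · have hw := hqp.dvd_of_dvd_pow h1
      have hmx : (q:ℤ) ∣ m * x := by
        have := dvd_add hqL (Dvd.dvd.mul_left hw n)
        simpa using this
      rcases hqp.dvd_or_dvd hmx with h2 | h2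
      · rcases hm with rfl | rfl
        · exact hqp.not_dvd_one h2
        · have : q ∣ 2 := by exact_mod_cast h2
          exact hq2 ((Nat.prime_dvd_prime_iff_eq hq (by norm_num)).mp this)
      · exact cop_not_dvd h.1 hq ⟨h2, hw⟩

instance : Fact (Nat.Prime 11) := ⟨by norm_num⟩
instance : Fact (Nat.Prime 971) := ⟨by norm_num⟩

theorem roots971 : ∀ r : ZMod 971, r ^ 6 + 2 * r ^ 5 + 5 * r ^ 4 + 10 * r ^ 3 + 10 * r ^ 2 + 4 * r + 1 = 0 →
    r = 92 ∨ r = 274 ∨ r = 286 ∨ r = 616 ∨ r = 768 ∨ r = 875 := by decide +kernel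

theorem chi11 : ∀ x w : ZMod 11, (x ≠ 0 ∨ w ≠ 0) → (x = 0 ∨ w = 0 ∨ x + w = 0) →
    quadraticChar (ZMod 11) ((x - w) * (x + 2 * w)) = 1 ∧
    quadraticChar (ZMod 11) ((x - w) * (2 * x + w)) = -1 := by decide +kernel

theorem bits2913 (x w y : ℤ) (h : IsPt 2913 x w y)
    (h11 : (x : ZMod 11) = 0 ∨ (w : ZMod 11) = 0 ∨ (x : ZMod 11) + w = 0) : False := by
  have hxw : (x : ZMod 11) ≠ 0 ∨ (w : ZMod 11) ≠ 0 := by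
    by_contra hcon
    push Not at hcon
    exact cop_not_dvd h.1 (q := 11) (by norm_num)
      ⟨(ZMod.intCast_zmod_eq_zero_iff_dvd x 11).mp hcon.1, (ZMod.intCast_zmod_eq_zero_iff_dvd w 11).mp hcon.2⟩
  obtain ⟨c1, c2⟩ := chi11 _ _ hxw h11
  have hsplit : ∀ L : ℤ, jacobiSym L 10681 = 1 → jacobiSym L 11 * jacobiSym L 971 = 1 := by
    intro L hL; rw [← jacobiSym.mul_right]; exact hL
  have hj11 : ∀ L : ℤ, jacobiSym L 11 = quadraticChar (ZMod 11) (L : ZMod 11) := by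
    intro L; rw [← jacobiSym.legendreSym.to_jacobiSym]; rfl
  have hj971 : ∀ L : ℤ, jacobiSym L 971 = quadraticChar (ZMod 971) (L : ZMod 971) := by
    intro L; rw [← jacobiSym.legendreSym.to_jacobiSym]; rfl
  have hne : ∀ L : ℤ, jacobiSym L 11 ≠ 0 → ¬ (11:ℤ) ∣ L := by
    intro L hL hd
    apply hL
    rw [hj11, (ZMod.intCast_zmod_eq_zero_iff_dvd L 11).mpr (by exact_mod_cast hd)]
    simp
  have c1' : jacobiSym (1 * x - 1 * w) 11 * jacobiSym (1 * x - (-2) * w) 11 = 1 := by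
    rw [hj11, hj11, ← map_mul]; push_cast; rw [← c1]; congr 1; ring
  have c2' : jacobiSym (1 * x - 1 * w) 11 * jacobiSym (2 * x - (-1) * w) 11 = -1 := by
    rw [hj11, hj11, ← map_mul]; push_cast; rw [← c2]; congr 1; ring
  have n1 : jacobiSym (1 * x - 1 * w) 11 ≠ 0 := fun h => by rw [h] at c1'; simp at c1'
  have n2 : jacobiSym (1 * x - (-2) * w) 11 ≠ 0 := fun h => by rw [h] at c1'; simp at c1'
  have n3 : jacobiSym (2 * x - (-1) * w) 11 ≠ 0 := fun h => by rw [h] at c2'; simp at c2'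
  have b1 := hsplit _ (bit2913 x w y h 1 1 (by norm_num) (by norm_num) (hne _ n1))
  have b2 := hsplit _ (bit2913 x w y h 1 (-2) (by norm_num) (by norm_num) (hne _ n2))
  have b3 := hsplit _ (bit2913 x w y h 2 (-1) (by norm_num) (by norm_num) (hne _ n3))
  have d1 : jacobiSym ((1 * x - 1 * w) * (1 * x - (-2) * w)) 971 = 1 := by
    rw [jacobiSym.mul_left]; linear_combination (jacobiSym (1 * x - 1 * w) 971 * jacobiSym (1 * x - (-2) * w) 971) * (-c1')
      + b1 * jacobiSym (1 * x - (-2) * w) 11 * jacobiSym (1 * x - (-2) * w) 971 + b2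
  have d2 : jacobiSym ((1 * x - 1 * w) * (2 * x - (-1) * w)) 971 = -1 := by
    rw [jacobiSym.mul_left]; linear_combination (jacobiSym (1 * x - 1 * w) 971 * jacobiSym (2 * x - (-1) * w) 971) * c2'
      - b1 * jacobiSym (2 * x - (-1) * w) 11 * jacobiSym (2 * x - (-1) * w) 971 - b3
  have hF := congrArg (Int.cast : ℤ → ZMod 971) h.2
  push_cast at hF
  have h2913 : (2913 : ZMod 971) = 0 := by decide
  rw [h2913, zero_mul] at hF
  have hw0 : (w : ZMod 971) ≠ 0 := by
    intro hw
    rw [hw] at hF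
    have hF := pow_eq_zero_iff (n := 6) (by norm_num) |>.mp (show (x : ZMod 971) ^ 6 = 0 by rw [hF]; ring)
    exact cop_not_dvd h.1 (q := 971) (by norm_num)
      ⟨(ZMod.intCast_zmod_eq_zero_iff_dvd x 971).mp hF, (ZMod.intCast_zmod_eq_zero_iff_dvd w 971).mp hw⟩
  set r : ZMod 971 := x / w with hr
  have hx : (x : ZMod 971) = r * w := by rw [hr]; field_simp
  have hroot := roots971 r (by
    rw [hx] at hF
    have : (w : ZMod 971) ^ 6 * (r ^ 6 + 2 * r ^ 5 + 5 * r ^ 4 + 10 * r ^ 3 + 10 * r ^ 2 + 4 * r + 1) = 0 := by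
      linear_combination -hF
    exact (mul_eq_zero.mp this).resolve_left (pow_ne_zero 6 hw0))
  have hw2 : quadraticChar (ZMod 971) ((w : ZMod 971) ^ 2) = 1 := quadraticChar_sq_one' hw0
  have d1' : quadraticChar (ZMod 971) ((r - 1) * (r + 2)) = 1 := by
    rw [hj971] at d1; rw [← d1]; push_cast
    rw [hx, show (1 * (r * (w : ZMod 971)) - 1 * w) * (1 * (r * w) - -2 * w) = ((r - 1) * (r + 2)) * w ^ 2 by ring,
      map_mul _ ((r - 1) * (r + 2)), hw2, mul_one]
  have d2' : quadraticChar (ZMod 971) ((r - 1) * (2 * r + 1)) = -1 := by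
    rw [hj971] at d2; rw [← d2]; push_cast
    rw [hx, show (1 * (r * (w : ZMod 971)) - 1 * w) * (2 * (r * w) - -1 * w) = ((r - 1) * (2 * r + 1)) * w ^ 2 by ring,
      map_mul _ ((r - 1) * (2 * r + 1)), hw2, mul_one]
  rcases hroot with h | h | h | h | h | h <;> rw [h] at d1' d2' <;> revert d1' d2' <;> decide +kernel


abbrev Q11 := QuadraticAlgebra (ZMod 11) ((-243 : ℤ) : ZMod 11) 1

theorem loc11 : ∀ p q : ZMod 11, (p = 11 ∧ q = 1) ∨ (p = -12 ∧ q = 1) ∨ (p = 12 ∧ q = -1) ∨ (p = -11 ∧ q = -1) →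
   ∀ X W Y : ZMod 11, (W = 1 ∨ (W = 0 ∧ X = 1)) →
      2913 * Y ^ 2 = X ^ 6 + 2 * X ^ 5 * W
        + 5 * X ^ 4 * W ^ 2 + 10 * X ^ 3 * W ^ 3
        + 10 * X ^ 2 * W ^ 4 + 4 * X * W ^ 5 + W ^ 6 →
    (((⟨(X ^ 3 + 3 * X ^ 2 * W - W ^ 3 - 3 * Y) * 2, Y⟩ : Q11) * (⟨p + q, -q⟩ : Q11)) ^ 4).im = 0 →
    X = 0 ∨ W = 0 ∨ X + W = 0 := by decide +kernel

theorem loc9a : ∀ u w y : ZMod 9, 3 * w ≠ 0 →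
    971 * y ^ 2 = 11 * w ^ 6 + 90 * u * w ^ 5 + 315 * u ^ 2 * w ^ 4 + 630 * u ^ 3 * w ^ 3
      + 810 * u ^ 4 * w ^ 2 + 648 * u ^ 5 * w + 243 * u ^ 6 →
    ∀ A : ZMod 9, 2 * A + y = w ^ 3 + 9 * u * w ^ 2 + 18 * u ^ 2 * w + 9 * u ^ 3 →
    A ^ 3 ≠ A ∧ (A + y) ^ 3 ≠ A + y := by decide +kernel

theorem loc9b : ∀ g v : ZMod 9,
    (g ^ 3 + 3 * (-243) * g * v ^ 2 + (-243) * v ^ 3 = 0 ∨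
     g ^ 3 + 3 * (-243) * g * v ^ 2 + (-243) * v ^ 3
       + (3 * g ^ 2 * v + 3 * g * v ^ 2 + (1 + (-243)) * v ^ 3) = 0) →
    (3 * g ^ 2 * v + 3 * g * v ^ 2 + (1 + (-243)) * v ^ 3) ^ 3 =
      3 * g ^ 2 * v + 3 * g * v ^ 2 + (1 + (-243)) * v ^ 3 := by decide +kernel

theorem no_pt_2913 (x w y : ℤ) (h : IsPt 2913 x w y) : False := by
  obtain ⟨u, z, A, m, p, q, g, v, hu, hw, hz, hA, hm, hm2, hn, hp, hh⟩ :=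
    case2 2913 971 (-243) x w y (by norm_num) (by norm_num) (by norm_num) h
  have := enum_mu 971 3 m p q (-243) 18 10 (fun m q => good2 m q ∨ (m = 9 ∧ q = 3) ∨ (m = 5 ∧ q = 1))
    (by norm_num) (by norm_num) hm
    (by push_cast; nlinarith) hp (by norm_num) (by norm_num) (by decide +kernel)
  rcases this with hg | ⟨hm9, hq3⟩ | ⟨hm5, hq1⟩
  · exact good2_false _ z m A y p q g v (by norm_num) hm (pt_mod2 _ x w y h).1 hn hp hh hg
  · have hm9' : m = 9 := by omega
    subst hm9'
    obtain ⟨c1, c2⟩ := cube_comp _ _ _ _ _ _ _ _ hh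
    have hcur : 971 * y ^ 2 = 11 * w ^ 6 + 90 * u * w ^ 5 + 315 * u ^ 2 * w ^ 4 + 630 * u ^ 3 * w ^ 3
      + 810 * u ^ 4 * w ^ 2 + 648 * u ^ 5 * w + 243 * u ^ 6 := by
      have := h.2
      rw [hu] at this
      linarith
    have hcur9 := congrArg (Int.cast : ℤ → ZMod 9) hcur
    have hA9 := congrArg (Int.cast : ℤ → ZMod 9) hA
    push_cast at hcur9 hA9
    have hw9 : (3 : ZMod 9) * w ≠ 0 := by
      intro h0
      have := ZMod.intCast_zmod_eq_zero_iff_dvd (3 * w) 9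
      push_cast at this
      have := this.mp h0
      omega
    obtain ⟨l1, l2⟩ := loc9a u w y hw9 hcur9 A hA9
    have l3 := loc9b g v
    set G := g ^ 3 + 3 * (-243) * g * v ^ 2 + (-243) * v ^ 3 with hG
    set V := 3 * g ^ 2 * v + 3 * g * v ^ 2 + (1 + (-243)) * v ^ 3 with hV
    have l4 : ((G : ZMod 9) = 0 ∨ (G : ZMod 9) + V = 0) → (V : ZMod 9) ^ 3 = V := by
      rw [hG, hV]; push_cast; exact l3
    have h243 : ((243 : ℤ) : ZMod 9) = 0 := by decide
    rcases Int.natAbs_eq q with hq | hq <;> rw [hq3] at hq <;> push_cast at hq <;> subst hq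
    · have : p * (p + 3) = 0 := by linear_combination hp
      rcases mul_eq_zero.mp this with h | h
      · subst h
        have e1 : A = -V := by linarith
        have e2 : G + V = 243 * y := by linarith
        have e3 : (G : ZMod 9) + V = 0 := by
          rw [← Int.cast_add, e2, Int.cast_mul, h243, zero_mul]
        have e4 := l4 (Or.inr e3)
        apply l1; rw [e1]; push_cast; linear_combination -e4
      · have h : p = -3 := by omega
        subst h
        have e2 : G = 243 * y := by linarith
        have e1 : A + y = -V := by linarith
        have e3 : (G : ZMod 9) = 0 := by
          rw [e2, Int.cast_mul, h243, zero_mul]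
        have e4 := l4 (Or.inl e3)
        apply l2; rw [← Int.cast_add, e1]; push_cast; linear_combination -e4
    · have : p * (p - 3) = 0 := by linear_combination hp
      rcases mul_eq_zero.mp this with h | h
      · subst h
        have e1 : A = V := by linarith
        have e2 : G + V = 243 * (-y) := by linarith
        have e3 : (G : ZMod 9) + V = 0 := by
          rw [← Int.cast_add, e2, Int.cast_mul, h243, zero_mul]
        have e4 := l4 (Or.inr e3)
        apply l1; rw [e1]; exact e4
      · have h : p = 3 := by omega
        subst h
        have e2 : G = 243 * (-y) := by linarith
        have e1 : A + y = V := by linarith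
        have e3 : (G : ZMod 9) = 0 := by
          rw [e2, Int.cast_mul, h243, zero_mul]
        have e4 := l4 (Or.inl e3)
        apply l2; rw [← Int.cast_add, e1]; exact e4
  · have hm5' : m = 5 := by omega
    subst hm5'
    have hpq : (p = 11 ∧ q = 1) ∨ (p = -12 ∧ q = 1) ∨ (p = 12 ∧ q = -1) ∨ (p = -11 ∧ q = -1) := by
      rcases Int.natAbs_eq q with hq | hq <;> rw [hq1] at hq <;> push_cast at hq <;> subst hq
      · have : (p - 11) * (p + 12) = 0 := by linear_combination hp
        rcases mul_eq_zero.mp this with h | h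
        · left; omega
        · right; left; omega
      · have : (p - 12) * (p + 11) = 0 := by linear_combination hp
        rcases mul_eq_zero.mp this with h | h
        · right; right; left; omega
        · right; right; right; omega
    obtain ⟨t, ht, hch, hcur⟩ := chart 11 2913 x w y h
    have h1 := cube_map _ 11 _ _ _ _ _ _ _ hh
    have h2 := cube_scale 11 _ t _ _ _ _ _ _ _ h1
    have h3 := trit_test 11 4 _ (by decide +kernel) (by norm_num) _ _ _ _ _ _ _ (by decide) h2
    have hAx : (t ^ 3 * A : ZMod 11) = ((t * x) ^ 3 + 3 * (t * x) ^ 2 * (t * w) - (t * w) ^ 3 - 3 * (t ^ 3 * y)) * 2 := by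
      have e : 6 * A + 3 * y = x ^ 3 + 3 * x ^ 2 * w - w ^ 3 := by rw [hu]; linarith
      have e1 := congrArg (Int.cast : ℤ → ZMod 11) e
      push_cast at e1
      have h24 : (11 : ZMod 11) = 0 := by decide
      linear_combination (2 * t ^ 3) * e1 - (t ^ 3 * A) * h24
    rw [hAx] at h3
    have hpq' : ((p : ZMod 11) = 11 ∧ (q : ZMod 11) = 1) ∨ ((p : ZMod 11) = -12 ∧ (q : ZMod 11) = 1) ∨
        ((p : ZMod 11) = 12 ∧ (q : ZMod 11) = -1) ∨ ((p : ZMod 11) = -11 ∧ (q : ZMod 11) = -1) := by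
      rcases hpq with ⟨rfl, rfl⟩ | ⟨rfl, rfl⟩ | ⟨rfl, rfl⟩ | ⟨rfl, rfl⟩ <;> simp
    have hmain := loc11 p q hpq' _ _ _ hch (by simpa using hcur) h3
    apply bits2913 x w y h
    rcases hmain with h | h | h
    · left; exact (mul_eq_zero.mp h).resolve_left ht
    · right; left; exact (mul_eq_zero.mp h).resolve_left ht
    · right; right; rw [← mul_add] at h; exact (mul_eq_zero.mp h).resolve_left ht


instance : Fact (Nat.Prime 13) := ⟨by norm_num⟩
instance : Fact (Nat.Prime 89) := ⟨by norm_num⟩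
instance : Fact (Nat.Prime 3769) := ⟨by norm_num⟩

theorem loc13 : ∀ X W Y : ZMod 13, (W = 1 ∨ (W = 0 ∧ X = 1)) →
      3769 * Y ^ 2 = X ^ 6 + 2 * X ^ 5 * W
        + 5 * X ^ 4 * W ^ 2 + 10 * X ^ 3 * W ^ 3
        + 10 * X ^ 2 * W ^ 4 + 4 * X * W ^ 5 + W ^ 6 →
    (∃ c : ZMod 13, 19 ^ 3 * ((X ^ 3 + 3 * X ^ 2 * W - W ^ 3 - Y) * 7 + 9 * Y) = 72 * c ^ 3) →
    (∃ c : ZMod 13, 19 ^ 3 * ((X ^ 3 + 3 * X ^ 2 * W - W ^ 3 - Y) * 7 + 5 * Y) = 68 * c ^ 3) →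
    ((X ^ 3 - 3 * X ^ 2 * W - 6 * X * W ^ 2 - W ^ 3 - 3 * Y) * 7 + 11 * (3 * Y)) ^ 4 = 3 := by
  decide +kernel

theorem place13 (x w y A A' : ℤ) (h : IsPt 3769 x w y)
    (hA : 2 * A + y = x ^ 3 + 3 * x ^ 2 * w - w ^ 3)
    (hA' : 2 * A' + 3 * y = x ^ 3 - 3 * x ^ 2 * w - 6 * x * w ^ 2 - w ^ 3)
    (h9 : ∃ c : ZMod 13, 19 ^ 3 * ((A : ZMod 13) + 9 * y) = 72 * c ^ 3)
    (h5 : ∃ c : ZMod 13, 19 ^ 3 * ((A : ZMod 13) + 5 * y) = 68 * c ^ 3) :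
    ((A' : ZMod 13) + 11 * (3 * y)) ^ 4 = 3 := by
  obtain ⟨t, ht, hch, hcur⟩ := chart 13 3769 x w y h
  have h13 : (13 : ZMod 13) = 0 := by decide
  have e1 := congrArg (Int.cast : ℤ → ZMod 13) hA
  have e2 := congrArg (Int.cast : ℤ → ZMod 13) hA'
  push_cast at e1 e2
  have a1 : ((t * x) ^ 3 + 3 * (t * x) ^ 2 * (t * w) - (t * w) ^ 3 - t ^ 3 * y) * 7 = t ^ 3 * (A : ZMod 13) := by
    linear_combination (-7 * t ^ 3) * e1 + t ^ 3 * A * h13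
  have a2 : ((t * x) ^ 3 - 3 * (t * x) ^ 2 * (t * w) - 6 * (t * x) * (t * w) ^ 2 - (t * w) ^ 3 - 3 * (t ^ 3 * y)) * 7
      = t ^ 3 * (A' : ZMod 13) := by
    linear_combination (-7 * t ^ 3) * e2 + t ^ 3 * A' * h13
  have key := loc13 (t * x) (t * w) (t ^ 3 * y) hch (by simpa using hcur)
  rw [a1, a2] at key
  obtain ⟨c9, hc9⟩ := h9
  obtain ⟨c5, hc5⟩ := h5
  have := key ⟨t * c9, by linear_combination t ^ 3 * hc9⟩ ⟨t * c5, by linear_combination t ^ 3 * hc5⟩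
  have ht12 : t ^ 12 = 1 := ZMod.pow_card_sub_one_eq_one ht
  linear_combination this - ((A' : ZMod 13) + 11 * (3 * y)) ^ 4 * ht12

theorem not_sq_3769 (a b : ℤ) (h : a ^ 2 = (1 + 4 * 942) * b ^ 2) : b = 0 := by
  by_contra hb
  have hq : IsSquare ((3769 : ℕ) : ℚ) := by
    refine ⟨(a : ℚ) / b, ?_⟩
    have hb' : (b : ℚ) ≠ 0 := by exact_mod_cast hb
    have h' : (a : ℚ) ^ 2 = (1 + 4 * 942) * b ^ 2 := by exact_mod_cast h
    field_simp
    push_cast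
    linarith
  rw [Rat.isSquare_natCast_iff] at hq
  revert hq
  decide +kernel

theorem enum3769a : ∀ m < 36, ∀ q < 28, m = 0 ∨ ¬ IsSquare (3769 * q ^ 2 + 8 * m ^ 3) ∨
    2851206 < 7538 * q ^ 2 + 8 * m ^ 3 ∨
      (m, q) ∈ [(32, 0), (30, 10), (20, 15), (18, 0), (12, 2), (8, 0), (3, 15), (2, 0)] := by
  decide +kernel

theorem enum3769b : ∀ m < 36, ∀ q < 28, m = 0 ∨
    3769 * q ^ 2 < 8 * m ^ 3 ∨ ¬ IsSquare (3769 * q ^ 2 - 8 * m ^ 3) ∨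
      (m, q) ∈ [(6, 6), (10, 3), (12, 11), (15, 13), (27, 15), (30, 15), (32, 20)] := by
  decide +kernel

def mus : List (ℤ × ℤ) := [(470, 15), (84, 2), (-186, 6), (-82, 3), (-423, 15), (-568, 20),
  (-470, -15), (-84, -2), (186, -6), (82, -3), (423, -15), (568, -20)]

theorem enum3769' (m p q : ℤ) (hm : m ≠ 0) (hm2 : 3 * m ^ 2 ≤ 3769)
    (hp : p ^ 2 + p * q - 942 * q ^ 2 = (-2) * m ^ 3)
    (hb : (2 * p + q) ^ 2 + 3769 * q ^ 2 ≤ 2851206)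
    (h13 : (m : ZMod 13) ≠ 0 → ((p : ZMod 13) + 11 * q) ^ 4 = 3) : (p, q) ∈ mus ∧ (m : ZMod 89) ≠ 0 := by
  have hq : q.natAbs < 28 := by
    zify; rw [abs_lt]; constructor <;> nlinarith [sq_nonneg (2 * p + q)]
  have hm36 : m.natAbs < 36 := by
    zify; rw [abs_lt]; constructor <;> nlinarith
  have hM : (2 * p + q) ^ 2 = 3769 * q ^ 2 - 8 * m ^ 3 := by linear_combination 4 * hp
  have hMn : ((2 * p + q).natAbs : ℤ) ^ 2 = 3769 * (q.natAbs : ℤ) ^ 2 - 8 * m ^ 3 := by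
    rw [Int.natCast_natAbs, Int.natCast_natAbs, sq_abs, sq_abs, hM]
  have hbn : ((2 * p + q).natAbs : ℤ) ^ 2 + 3769 * (q.natAbs : ℤ) ^ 2 ≤ 2851206 := by
    rw [Int.natCast_natAbs, Int.natCast_natAbs, sq_abs, sq_abs]; exact hb
  have key1 := enum3769a _ hm36 _ hq
  have key2 := enum3769b _ hm36 _ hq
  have hml : (m.natAbs, q.natAbs) ∈ [(32, 0), (30, 10), (20, 15), (18, 0), (12, 2), (8, 0), (3, 15), (2, 0)] ∧ m < 0
     ∨ (m.natAbs, q.natAbs) ∈ [(6, 6), (10, 3), (12, 11), (15, 13), (27, 15), (30, 15), (32, 20)] ∧ 0 < m := by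
    have k1 := key1.resolve_left (fun k => hm (Int.natAbs_eq_zero.mp k))
    have k2 := key2.resolve_left (fun k => hm (Int.natAbs_eq_zero.mp k))
    rcases lt_or_gt_of_ne hm with hneg | hpos
    · left
      refine ⟨?_, hneg⟩
      have hma : m = -(m.natAbs : ℤ) := by omega
      rw [hma] at hMn
      generalize (2 * p + q).natAbs = M at hMn hbn
      generalize m.natAbs = m' at *
      generalize q.natAbs = q' at *
      rcases k1 with k | k | k
      · exfalso; apply k; refine ⟨M, ?_⟩; zify; linarith
      · exfalso; zify at k; linarith
      · exact k
    · right
      refine ⟨?_, hpos⟩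
      have hma : m = (m.natAbs : ℤ) := by omega
      rw [hma] at hMn
      generalize (2 * p + q).natAbs = M at hMn hbn
      generalize m.natAbs = m' at *
      generalize q.natAbs = q' at *
      rcases k2 with k | k | k
      · exfalso; zify at k; nlinarith [sq_nonneg (M:ℤ)]
      · exfalso; apply k; refine ⟨M, ?_⟩
        have : 3769 * q' ^ 2 = M * M + 8 * m' ^ 3 := by zify; linarith
        omega
      · exact k
  have hsq : ∀ s : ℤ, (2 * p + q) ^ 2 = s ^ 2 → 2 * p + q = s ∨ 2 * p + q = -s := fun s h => sq_eq_sq_iff_eq_or_eq_neg.mp h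
  have fin : ∀ s Q : ℤ, ∀ m' : ℤ, m = m' → (q = Q ∨ q = -Q) → 3769 * Q ^ 2 - 8 * m' ^ 3 = s ^ 2 →
      (∀ P Q' : ℤ, Q' = Q ∨ Q' = -Q → 2 * P + Q' = s ∨ 2 * P + Q' = -s →
        ((P : ZMod 13) + 11 * Q') ^ 4 = 3 → (P, Q') ∈ mus) →
      (m' : ZMod 89) ≠ 0 ∧ (m' : ZMod 13) ≠ 0 → (p, q) ∈ mus ∧ (m : ZMod 89) ≠ 0 := by
    intro s Q m' hm hq hs hc h89
    refine ⟨?_, by rw [hm]; exact h89.1⟩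
    apply hc p q hq _ (h13 (by rw [hm]; exact h89.2))
    apply hsq
    rw [hM, hm, ← hs]; rcases hq with h | h <;> rw [h] <;> ring
  have aux : ∀ s Q : ℤ, (∀ P ∈ [(s - Q) / 2, (-s - Q) / 2], ((P : ZMod 13) + 11 * Q) ^ 4 = 3 → (P, Q) ∈ mus) →
      (∀ P ∈ [(s + Q) / 2, (-s + Q) / 2], ((P : ZMod 13) + 11 * (-Q : ℤ)) ^ 4 = 3 → (P, -Q) ∈ mus) →
      (∀ P Q' : ℤ, Q' = Q ∨ Q' = -Q → 2 * P + Q' = s ∨ 2 * P + Q' = -s →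
        ((P : ZMod 13) + 11 * Q') ^ 4 = 3 → (P, Q') ∈ mus) := by
    intro s Q h1 h2 P Q' hQ hP
    rcases hQ with rfl | rfl
    · apply h1
      simp only [List.mem_cons, List.not_mem_nil, or_false]
      omega
    · apply h2
      simp only [List.mem_cons, List.not_mem_nil, or_false]
      omega
  simp only [List.mem_cons, List.not_mem_nil, or_false, Prod.mk.injEq] at hml
  rcases hml with ⟨hl, hs⟩ | ⟨hl, hs⟩
  · rcases hl with ⟨h1, h2⟩ | ⟨h1, h2⟩ | ⟨h1, h2⟩ | ⟨h1, h2⟩ | ⟨h1, h2⟩ | ⟨h1, h2⟩ | ⟨h1, h2⟩ | ⟨h1, h2⟩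
    · exact fin 512 0 (-32) (by omega) (by omega) (by norm_num) (aux _ _ (by decide +kernel) (by decide +kernel)) (by decide +kernel)
    · exact fin 770 10 (-30) (by omega) (by omega) (by norm_num) (aux _ _ (by decide +kernel) (by decide +kernel)) (by decide +kernel)
    · exact fin 955 15 (-20) (by omega) (by omega) (by norm_num) (aux _ _ (by decide +kernel) (by decide +kernel)) (by decide +kernel)
    · exact fin 216 0 (-18) (by omega) (by omega) (by norm_num) (aux _ _ (by decide +kernel) (by decide +kernel)) (by decide +kernel)
    · exact fin 170 2 (-12) (by omega) (by omega) (by norm_num) (aux _ _ (by decide +kernel) (by decide +kernel)) (by decide +kernel)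
    · exact fin 64 0 (-8) (by omega) (by omega) (by norm_num) (aux _ _ (by decide +kernel) (by decide +kernel)) (by decide +kernel)
    · exact fin 921 15 (-3) (by omega) (by omega) (by norm_num) (aux _ _ (by decide +kernel) (by decide +kernel)) (by decide +kernel)
    · exact fin 8 0 (-2) (by omega) (by omega) (by norm_num) (aux _ _ (by decide +kernel) (by decide +kernel)) (by decide +kernel)
  · rcases hl with ⟨h1, h2⟩ | ⟨h1, h2⟩ | ⟨h1, h2⟩ | ⟨h1, h2⟩ | ⟨h1, h2⟩ | ⟨h1, h2⟩ | ⟨h1, h2⟩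
    · exact fin 366 6 6 (by omega) (by omega) (by norm_num) (aux _ _ (by decide +kernel) (by decide +kernel)) (by decide +kernel)
    · exact fin 161 3 10 (by omega) (by omega) (by norm_num) (aux _ _ (by decide +kernel) (by decide +kernel)) (by decide +kernel)
    · exact fin 665 11 12 (by omega) (by omega) (by norm_num) (aux _ _ (by decide +kernel) (by decide +kernel)) (by decide +kernel)
    · exact fin 781 13 15 (by omega) (by omega) (by norm_num) (aux _ _ (by decide +kernel) (by decide +kernel)) (by decide +kernel)
    · exact fin 831 15 27 (by omega) (by omega) (by norm_num) (aux _ _ (by decide +kernel) (by decide +kernel)) (by decide +kernel)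
    · exact fin 795 15 30 (by omega) (by omega) (by norm_num) (aux _ _ (by decide +kernel) (by decide +kernel)) (by decide +kernel)
    · exact fin 1116 20 32 (by omega) (by omega) (by norm_num) (aux _ _ (by decide +kernel) (by decide +kernel)) (by decide +kernel)

theorem eval13 (k : ℤ) (u : ZMod 13) (hu : u * u = (k : ZMod 13) + u) (m A y p q g v : ℤ)
    (h : (m : QO k) ^ 3 * ⟨A, y⟩ = ⟨p, q⟩ * (⟨g, v⟩ : QO k) ^ 3) :
    (m : ZMod 13) ^ 3 * (A + y * u) = (p + q * u) * (g + v * u) ^ 3 := by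
  obtain ⟨φ, hφ⟩ := exists_evalHom k u hu
  have := congrArg φ h
  rwa [map_mul, map_mul, map_pow, map_pow, map_intCast, hφ, hφ, hφ] at this

/-- The cubic descent over `ℚ(√3769)`, combined with the information at `13`. -/
theorem trit3769 (x w y A : ℤ) (h : IsPt 3769 x w y)
    (hA : 2 * A + y = x ^ 3 + 3 * x ^ 2 * w - w ^ 3)
    (h9 : ∃ c : ZMod 13, 19 ^ 3 * ((A : ZMod 13) + 9 * y) = 72 * c ^ 3)
    (h5 : ∃ c : ZMod 13, 19 ^ 3 * ((A : ZMod 13) + 5 * y) = 68 * c ^ 3) :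
    ∃ A' m p q g v : ℤ, 2 * A' + 3 * y = x ^ 3 - 3 * x ^ 2 * w - 6 * x * w ^ 2 - w ^ 3 ∧
      (p, q) ∈ mus ∧ (m : ZMod 89) ≠ 0 ∧
      (m : QO 942) ^ 3 * ⟨A', 3 * y⟩ = ⟨p, q⟩ * (⟨g, v⟩ : QO 942) ^ 3 := by
  obtain ⟨h1, h2, h3⟩ := pt_mod2 _ x w y h
  obtain ⟨h4, h5'⟩ := pt_mod3 3769 x w y (by norm_num) h
  have hcop := pt_cop _ x w y h _ (prime_dvd_three_not _ h5') dvd_rfl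
  have hcop3 : IsCoprime (x ^ 2 + x * w + w ^ 2) 3 := by
    rw [Int.isCoprime_iff_gcd_eq_one, Int.gcd_comm]
    have : Nat.Coprime 3 (x ^ 2 + x * w + w ^ 2).natAbs := by
      rw [Nat.Prime.coprime_iff_not_dvd (by norm_num)]
      omega
    exact this
  obtain ⟨A', hA'⟩ : ∃ A', 2 * A' + 3 * y = x ^ 3 - 3 * x ^ 2 * w - 6 * x * w ^ 2 - w ^ 3 :=
    ⟨(x ^ 3 - 3 * x ^ 2 * w - 6 * x * w ^ 2 - w ^ 3 - 3 * y) / 2, by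
      have : x ^ 3 - 3 * x ^ 2 * w - 6 * x * w ^ 2 - w ^ 3 =
        (x ^ 3 + 3 * x ^ 2 * w - w ^ 3) - 2 * (3 * x ^ 2 * w + 3 * x * w ^ 2) := by ring
      omega⟩
  have hN : A' ^ 2 + A' * (3 * y) - 942 * (3 * y) ^ 2 = (-2) * (x ^ 2 + x * w + w ^ 2) ^ 3 := by
    have e1 : 4 * (A' ^ 2 + A' * (3 * y) - 942 * (3 * y) ^ 2) = (2 * A' + 3 * y) ^ 2 - 9 * (3769 * y ^ 2) := by ring
    rw [hA', h.2] at e1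
    linarith
  obtain ⟨m, p, q, g, v, hm, hm2, hp, hh, Q, hQ0, hQ, hb⟩ :=
    real_descent 942 A' (3 * y) (-2) _ (by norm_num) not_sq_3769 (pt_zpos _ x w y h) (by norm_num)
      (hcop3.mul_right hcop) hN
  have hb' : (2 * p + q) ^ 2 + 3769 * q ^ 2 ≤ 2851206 := by
    have hQ1 : Q ≤ 70.9 := by
      push_cast at hQ
      nlinarith
    have hQ3 : Q ^ 3 ≤ 70.9 ^ 3 := pow_le_pow_left₀ hQ0 hQ1 3
    have : (((2 * p + q) ^ 2 + 3769 * q ^ 2 : ℤ) : ℝ) < ((2851206 + 1 : ℤ) : ℝ) := by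
      have e : |((-2 : ℤ) : ℝ)| = 2 := by norm_num
      rw [e] at hb
      calc (((2 * p + q) ^ 2 + 3769 * q ^ 2 : ℤ) : ℝ) = (((2 * p + q) ^ 2 + (1 + 4 * 942) * q ^ 2 : ℤ) : ℝ) := by
            norm_num
        _ ≤ 4 * 2 * Q ^ 3 := hb
        _ ≤ 4 * 2 * 70.9 ^ 3 := by linarith
        _ < _ := by norm_num
    have := Int.cast_lt.mp this
    omega
  have c11 := eval13 942 11 (by decide +kernel) _ _ _ _ _ _ _ hh
  have p13 := place13 x w y A A' h hA hA' h9 h5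
  have e12 : ∀ c : ZMod 13, c ^ 12 = 0 ∨ c ^ 12 = 1 := by decide +kernel
  have h13 : (m : ZMod 13) ≠ 0 → ((p : ZMod 13) + 11 * q) ^ 4 = 3 := by
    intro hm0
    have e : ((m : ZMod 13) ^ 3 * (A' + (3 * y : ℤ) * 11)) ^ 4 = ((p + q * 11) * (g + v * 11) ^ 3) ^ 4 := by rw [c11]
    have e' : (m : ZMod 13) ^ 12 * 3 = ((p : ZMod 13) + 11 * q) ^ 4 * ((g : ZMod 13) + v * 11) ^ 12 := by
      push_cast at e
      linear_combination e - (m : ZMod 13) ^ 12 * p13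
    have hm13 : (m : ZMod 13) ^ 12 = 1 := by
      exact ZMod.pow_card_sub_one_eq_one hm0
    rcases e12 ((g : ZMod 13) + v * 11) with e0 | e0
    · rw [e0, hm13] at e'; rw [mul_zero, one_mul] at e'; exact absurd e' (by decide)
    · rw [e0, hm13, mul_one, one_mul] at e'; exact e'.symm
  obtain ⟨r1, r2⟩ := enum3769' m p q hm (by linarith) (by linarith) hb' h13
  exact ⟨A', m, p, q, g, v, hA', r1, r2, hh⟩


theorem pre3769 (x w y : ℤ) (h : IsPt 3769 x w y) : ∃ y' A' m p q g v : ℤ, IsPt 3769 x w y' ∧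
      2 * A' + 3 * y' = x ^ 3 - 3 * x ^ 2 * w - 6 * x * w ^ 2 - w ^ 3 ∧
      (p, q) ∈ mus ∧ (m : ZMod 89) ≠ 0 ∧
      (m : QO 942) ^ 3 * ⟨A', 3 * y'⟩ = ⟨p, q⟩ * (⟨g, v⟩ : QO 942) ^ 3 := by
  obtain ⟨A, m, p, q, g, v, hA, hm, hm2, hn, hp, hh⟩ :=
    case1 3769 (-2827) x w y (by norm_num) (by norm_num) (by norm_num) h
  have := enum_mu 11307 1 m p q (-2827) 62 10 (fun m q => good m q ∨ (m = 19 ∧ q = 1))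
    (by norm_num) (by norm_num) hm (by push_cast; nlinarith) hp (by norm_num) (by norm_num) (by decide +kernel)
  rcases this with hg | ⟨hm19, hq1⟩
  · exact (good_false _ _ m A y p q g v (by norm_num) (by norm_num) hm (pt_mod2 _ x w y h).1
      (pt_mod3 _ x w y (by norm_num) h).1 hn hp hh hg).elim
  have hm19' : m = 19 := by omega
  subst hm19'
  have hpq : (p = 63 ∧ q = 1) ∨ (p = -64 ∧ q = 1) ∨ (p = 64 ∧ q = -1) ∨ (p = -63 ∧ q = -1) := by
    rcases Int.natAbs_eq q with hq | hq <;> rw [hq1] at hq <;> push_cast at hq <;> subst hq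
    · have : (p - 63) * (p + 64) = 0 := by linear_combination hp
      rcases mul_eq_zero.mp this with h | h
      · left; omega
      · right; left; omega
    · have : (p - 64) * (p + 63) = 0 := by linear_combination hp
      rcases mul_eq_zero.mp this with h | h
      · right; right; left; omega
      · right; right; right; omega
  have c9 := eval13 _ 9 (by decide +kernel) _ _ _ _ _ _ _ hh
  have c5 := eval13 _ 5 (by decide +kernel) _ _ _ _ _ _ _ hh
  have h13 : (13 : ZMod 13) = 0 := by decide
  push_cast at c9 c5
  have hneg : IsPt 3769 x w (-y) := ⟨h.1, by rw [neg_sq]; exact h.2⟩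
  rcases hpq with ⟨rfl, rfl⟩ | ⟨rfl, rfl⟩ | ⟨rfl, rfl⟩ | ⟨rfl, rfl⟩ <;> push_cast at c9 c5
  · obtain ⟨A', m, p, q, g, v, r⟩ := trit3769 x w y A h hA
      ⟨g + v * 9, by linear_combination c9⟩ ⟨g + v * 5, by linear_combination c5⟩
    exact ⟨y, A', m, p, q, g, v, h, r⟩
  · obtain ⟨A', m, p, q, g, v, r⟩ := trit3769 x w (-y) (A + y) hneg (by linarith)
      ⟨-(g + v * 5), by push_cast; linear_combination c5 - (19 ^ 3 * y - (g + v * 5 : ZMod 13) ^ 3) * h13⟩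
      ⟨-(g + v * 9), by push_cast; linear_combination c9 - (19 ^ 3 * y - (g + v * 9 : ZMod 13) ^ 3) * h13⟩
    exact ⟨-y, A', m, p, q, g, v, hneg, r⟩
  · obtain ⟨A', m, p, q, g, v, r⟩ := trit3769 x w (-y) (A + y) hneg (by linarith)
      ⟨(g + v * 5), by push_cast; linear_combination c5 - (19 ^ 3 * y + (g + v * 5 : ZMod 13) ^ 3) * h13⟩
      ⟨(g + v * 9), by push_cast; linear_combination c9 - (19 ^ 3 * y + (g + v * 9 : ZMod 13) ^ 3) * h13⟩
    exact ⟨-y, A', m, p, q, g, v, hneg, r⟩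
  · obtain ⟨A', m, p, q, g, v, r⟩ := trit3769 x w y A h hA
      ⟨-(g + v * 9), by linear_combination c9⟩ ⟨-(g + v * 5), by linear_combination c5⟩
    exact ⟨y, A', m, p, q, g, v, h, r⟩

abbrev Q89 := QuadraticAlgebra (ZMod 89) ((942 : ℤ) : ZMod 89) 1

abbrev χ89 (a : ZMod 89) : ℤ := quadraticChar (ZMod 89) a

theorem loc89a : ∀ X Y : ZMod 89, 3769 * Y ^ 2 = X ^ 6 + 2 * X ^ 5
        + 5 * X ^ 4 + 10 * X ^ 3 + 10 * X ^ 2 + 4 * X + 1 → ∀ μ ∈ mus,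
    (((⟨(X ^ 3 - 3 * X ^ 2 - 6 * X - 1 - 3 * Y) * 45, 3 * Y⟩ : Q89) * (⟨μ.1 + μ.2, -μ.2⟩ : Q89)) ^ 30).im = 0 →
    χ89 (8 - X) ≠ 0 ∧ χ89 (9 * X + 1) ≠ 0 ∧ χ89 (X - 10) ≠ 0 ∧ χ89 (2 * X + 10) ≠ 0 ∧ χ89 (10 * X + 8) ≠ 0 ∧
    ¬ (χ89 (8 - X) = χ89 (9 * X + 1) ∧ χ89 (8 - X) = χ89 (X - 10) ∧
      χ89 (8 - X) = - χ89 (2 * X + 10) ∧ χ89 (8 - X) = - χ89 (10 * X + 8)) := by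
  decide +kernel

theorem loc89b : ∀ Y : ZMod 89, 3769 * Y ^ 2 = 1 → ∀ μ ∈ mus,
    (((⟨(1 - 3 * Y) * 45, 3 * Y⟩ : Q89) * (⟨μ.1 + μ.2, -μ.2⟩ : Q89)) ^ 30).im ≠ 0 := by
  decide +kernel


theorem roots3769 : ∀ r : ZMod 3769, r ^ 6 + 2 * r ^ 5 + 5 * r ^ 4 + 10 * r ^ 3 + 10 * r ^ 2 + 4 * r + 1 = 0 →
    r = 899 ∨ r = 959 ∨ r = 2548 := by decide +kernel

theorem root3769 (x w y : ℤ) (h : IsPt 3769 x w y) : (w : ZMod 3769) ≠ 0 ∧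
    ∃ r : ZMod 3769, (r = 899 ∨ r = 959 ∨ r = 2548) ∧ (x : ZMod 3769) = r * w := by
  have hF := congrArg (Int.cast : ℤ → ZMod 3769) h.2
  push_cast at hF
  have h3769 : (3769 : ZMod 3769) = 0 := by decide
  rw [h3769, zero_mul] at hF
  have hw0 : (w : ZMod 3769) ≠ 0 := by
    intro hw
    rw [hw] at hF
    have hF := pow_eq_zero_iff (n := 6) (by norm_num) |>.mp (show (x : ZMod 3769) ^ 6 = 0 by rw [hF]; ring)
    exact cop_not_dvd h.1 (q := 3769) (by norm_num)
      ⟨(ZMod.intCast_zmod_eq_zero_iff_dvd x 3769).mp hF, (ZMod.intCast_zmod_eq_zero_iff_dvd w 3769).mp hw⟩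
  refine ⟨hw0, x / w, ?_, by field_simp⟩
  set r : ZMod 3769 := x / w with hr
  have hx : (x : ZMod 3769) = r * w := by rw [hr]; field_simp
  apply roots3769
  rw [hx] at hF
  have : (w : ZMod 3769) ^ 6 * (r ^ 6 + 2 * r ^ 5 + 5 * r ^ 4 + 10 * r ^ 3 + 10 * r ^ 2 + 4 * r + 1) = 0 := by
    linear_combination -hF
  exact (mul_eq_zero.mp this).resolve_left (pow_ne_zero 6 hw0)

/-- If `E0² + 2 E1² = y²` with `E0, E1` coprime and `y` odd then `E0 + E1 √-2` is `±` a square. -/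
theorem sq_sqrt_neg_two (E0 E1 y : ℤ) (h : E0 ^ 2 + 2 * E1 ^ 2 = y ^ 2) (hy : y % 2 = 1)
    (hc : IsCoprime E0 E1) : ∃ ε u v : ℤ, (ε = 1 ∨ ε = -1) ∧ E0 = ε * (u ^ 2 - 2 * v ^ 2) ∧
      E1 = ε * (2 * u * v) := by
  wlog hpos : 0 < y generalizing y
  · exact this (-y) (by rw [neg_sq]; exact h) (by omega) (by omega)
  have hE0 : E0 % 2 = 1 := by
    by_contra hcon
    have h2 : E0 % 2 = 0 := by omega
    obtain ⟨e, he⟩ : ∃ e, E0 = 2 * e := ⟨E0 / 2, by omega⟩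
    obtain ⟨f, hf⟩ : ∃ f, y = 2 * f + 1 := ⟨y / 2, by omega⟩
    rw [he, hf] at h
    ring_nf at h; omega
  obtain ⟨s, hs⟩ : ∃ s, y - E0 = 2 * s := ⟨(y - E0) / 2, by omega⟩
  obtain ⟨t, ht⟩ : ∃ t, y + E0 = 2 * t := ⟨(y + E0) / 2, by omega⟩
  have hst : 2 * (s * t) = E1 ^ 2 := by
    have : (y - E0) * (y + E0) = 2 * E1 ^ 2 := by linear_combination -h
    rw [hs, ht] at this; linarith
  have hy' : y = s + t := by linarith
  have hE0' : E0 = t - s := by linarith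
  obtain ⟨e, he⟩ : ∃ e, E1 = 2 * e := by
    have : (2:ℤ) ∣ E1 ^ 2 := ⟨_, hst.symm⟩
    exact Int.prime_two.dvd_of_dvd_pow this
  have hst2 : s * t = 2 * e ^ 2 := by rw [he] at hst; linarith
  have hs0 : 0 ≤ s := by nlinarith [sq_nonneg E1]
  have ht0 : 0 ≤ t := by nlinarith [sq_nonneg E1]
  have hcop : IsCoprime s t := by
    apply isCoprime_of_prime_dvd
    · rintro ⟨a, b⟩; omega
    · intro p hp ha hb
      have h0 : p ∣ E0 := by rw [hE0']; exact dvd_sub hb ha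
      have h1 : p ∣ E1 := by
        apply hp.dvd_of_dvd_pow (n := 2)
        rw [← hst]; exact Dvd.dvd.mul_left (Dvd.dvd.mul_right ha _) _
      exact hp.not_isUnit (hc.isUnit_of_dvd' h0 h1)
  have sqr : ∀ a b c : ℤ, 0 ≤ a → IsCoprime a b → a * b = c ^ 2 → ∃ r, a = r ^ 2 := by
    intro a b c ha hab h
    obtain ⟨r, hr | hr⟩ := Int.sq_of_isCoprime hab h
    · exact ⟨r, hr⟩
    · exact ⟨0, by nlinarith [sq_nonneg r]⟩
  have comb : ∀ a b : ℤ, e ^ 2 = a ^ 2 * b ^ 2 → ∃ b', b' ^ 2 = b ^ 2 ∧ e = a * b' := by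
    intro a b h
    have : e ^ 2 = (a * b) ^ 2 := by rw [h]; ring
    rcases sq_eq_sq_iff_eq_or_eq_neg.mp this with h | h
    · exact ⟨b, rfl, h⟩
    · exact ⟨-b, by ring, by rw [h]; ring⟩
  have h2 : (2:ℤ) ∣ s ∨ (2:ℤ) ∣ t := Int.prime_two.dvd_or_dvd ⟨_, hst2⟩
  rcases h2 with ⟨s', hs'⟩ | ⟨t', ht'⟩
  · subst hs'
    have hc' : IsCoprime s' t := IsCoprime.of_mul_left_right hcop
    have hm : s' * t = e ^ 2 := by linarith
    obtain ⟨v, hv⟩ := sqr s' t e (by omega) hc' hm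
    obtain ⟨u, hu⟩ := sqr t s' e ht0 hc'.symm (by linarith)
    obtain ⟨v', hv', hev⟩ := comb u v (by rw [← hm, hv, hu]; ring)
    exact ⟨1, u, v', Or.inl rfl, by rw [hE0', hu, hv, hv']; ring, by rw [he, hev]; ring⟩
  · subst ht'
    have hc' : IsCoprime s t' := IsCoprime.of_mul_right_right hcop
    have hm : s * t' = e ^ 2 := by linarith
    obtain ⟨u, hu⟩ := sqr s t' e hs0 hc' hm
    obtain ⟨v, hv⟩ := sqr t' s e (by omega) hc'.symm (by linarith)
    obtain ⟨v', hv', hev⟩ := comb u (v) (by rw [← hm, hv, hu])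
    exact ⟨-1, u, -v', Or.inr rfl, by rw [hE0', hu, hv, neg_sq, hv']; ring, by rw [he, hev]; ring⟩

theorem cop_CB (x w : ℤ) (h : IsCoprime x w)
    (hodd : (x ^ 3 + x ^ 2 * w - 2 * x * w ^ 2 - w ^ 3) % 2 = 1) (p : ℤ) (hp : Prime p)
    (hC : p ∣ x ^ 3 + x ^ 2 * w - 2 * x * w ^ 2 - w ^ 3) (hB : p ∣ 2 * (x * w * (x + w))) : False := by
  have hnot : p ∣ x → p ∣ w → False := fun ha hb => hp.not_isUnit (h.isUnit_of_dvd' ha hb)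
  have hxw : p ∣ x → False := fun ha => by
    refine hnot ha (hp.dvd_of_dvd_pow (n := 3) ?_)
    have : w ^ 3 = x * (x ^ 2 + x * w - 2 * w ^ 2) - (x ^ 3 + x ^ 2 * w - 2 * x * w ^ 2 - w ^ 3) := by ring
    rw [this]; exact dvd_sub (Dvd.dvd.mul_right ha _) hC
  rcases hp.dvd_or_dvd hB with h2 | hB
  · obtain ⟨c, hc⟩ : ∃ c, x ^ 3 + x ^ 2 * w - 2 * x * w ^ 2 - w ^ 3 = 2 * c + 1 := ⟨_, by
      rw [← hodd]; exact (Int.mul_ediv_add_emod _ 2).symm⟩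
    rw [hc] at hC
    have : p ∣ 1 := by
      have := dvd_sub hC (Dvd.dvd.mul_right h2 c)
      simpa using this
    exact hp.not_isUnit (isUnit_of_dvd_one this)
  · rcases hp.dvd_or_dvd hB with hB | hB
    · rcases hp.dvd_or_dvd hB with hB | hB
      · exact hxw hB
      · refine hnot (hp.dvd_of_dvd_pow (n := 3) ?_) hB
        have : x ^ 3 = (x ^ 3 + x ^ 2 * w - 2 * x * w ^ 2 - w ^ 3) - w * (x ^ 2 - 2 * x * w - w ^ 2) := by ring
        rw [this]; exact dvd_sub hC (Dvd.dvd.mul_right hB _)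
    · refine hxw (hp.dvd_of_dvd_pow (n := 3) ?_)
      have : x ^ 3 = (x + w) * (2 * x ^ 2 - x * w - w ^ 2) - (x ^ 3 + x ^ 2 * w - 2 * x * w ^ 2 - w ^ 3) := by ring
      rw [this]; exact dvd_sub (Dvd.dvd.mul_right hB _) hC

theorem div3769 (x w y : ℤ) (h : IsPt 3769 x w y) :
    (3769:ℤ) ∣ 59 * (x ^ 3 + x ^ 2 * w - 2 * x * w ^ 2 - w ^ 3) + 48 * (x * w * (x + w)) ∧
    (3769:ℤ) ∣ 118 * (x * w * (x + w)) - 12 * (x ^ 3 + x ^ 2 * w - 2 * x * w ^ 2 - w ^ 3) := by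
  obtain ⟨hw0, r, hr, hx⟩ := root3769 x w y h
  have k1 : 59 * (r ^ 3 + r ^ 2 - 2 * r - 1) + 48 * (r * (r + 1)) = 0 := by
    rcases hr with rfl | rfl | rfl <;> decide +kernel
  have k2 : 118 * (r * (r + 1)) - 12 * (r ^ 3 + r ^ 2 - 2 * r - 1) = 0 := by
    rcases hr with rfl | rfl | rfl <;> decide +kernel
  constructor
  · refine (ZMod.intCast_zmod_eq_zero_iff_dvd _ 3769).mp ?_
    push_cast; rw [hx]
    linear_combination (w : ZMod 3769) ^ 3 * k1
  · refine (ZMod.intCast_zmod_eq_zero_iff_dvd _ 3769).mp ?_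
    push_cast; rw [hx]
    linear_combination (w : ZMod 3769) ^ 3 * k2

theorem delta3769 (x w y : ℤ) (h : IsPt 3769 x w y) : ∃ ε u v : ℤ, (ε = 1 ∨ ε = -1) ∧
    x ^ 3 + x ^ 2 * w - 2 * x * w ^ 2 - w ^ 3 = ε * (59 * (u ^ 2 - 2 * v ^ 2) - 24 * (2 * u * v)) ∧
    2 * (x * w * (x + w)) = ε * (59 * (2 * u * v) + 12 * (u ^ 2 - 2 * v ^ 2)) := by
  obtain ⟨hy2, -, hP⟩ := pt_mod2 _ x w y h
  set C := x ^ 3 + x ^ 2 * w - 2 * x * w ^ 2 - w ^ 3 with hC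
  set B := x * w * (x + w) with hB
  have hCB : C ^ 2 + 8 * B ^ 2 = 3769 * y ^ 2 := by rw [h.2, hC, hB]; ring
  obtain ⟨hd1, hd2⟩ := div3769 x w y h
  rw [← hC, ← hB] at hd1 hd2
  obtain ⟨E0, hE0⟩ := hd1
  obtain ⟨E1, hE1⟩ := hd2
  have hCE : C = 59 * E0 - 24 * E1 := by linarith
  have hBE : 2 * B = 59 * E1 + 12 * E0 := by linarith
  have hE : E0 ^ 2 + 2 * E1 ^ 2 = y ^ 2 := by
    have e : C ^ 2 + 2 * (2 * B) ^ 2 = 3769 * y ^ 2 := by linarith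
    rw [hCE, hBE] at e
    linarith
  have hCodd : C % 2 = 1 := by
    have : x ^ 3 + 3 * x ^ 2 * w - w ^ 3 = C + 2 * B := by rw [hC, hB]; ring
    rw [this] at hP; clear_value C B; omega
  have hcop : IsCoprime E0 E1 := by
    apply isCoprime_of_prime_dvd
    · rintro ⟨a, b⟩; rw [hCE, a, b] at hCodd; norm_num at hCodd
    · intro p hp ha hb
      apply cop_CB x w h.1 hCodd p hp
      · rw [← hC, hCE]; exact dvd_sub (Dvd.dvd.mul_left ha _) (Dvd.dvd.mul_left hb _)
      · rw [← hB, hBE]; exact dvd_add (Dvd.dvd.mul_left hb _) (Dvd.dvd.mul_left ha _)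
  obtain ⟨ε, u, v, hε, h0, h1⟩ := sq_sqrt_neg_two E0 E1 y hE hy2 hcop
  exact ⟨ε, u, v, hε, by rw [hCE, h0, h1]; ring, by rw [hBE, h0, h1]; ring⟩


theorem bit3769 (x w y : ℤ) (h : IsPt 3769 x w y) (m n0 c0 c1 a G D K : ℤ) (hm : m = 1 ∨ m = 2)
    (ha : a = m * x - n0 * w) (hodd : a % 2 = 1) (hw : w ≠ 0) (hc0 : c0 ^ 2 = 81) (hc1 : c1 ^ 2 = 1)
    (hG : G = c0 * w - c1 * a) (hD : D = 59 * w - 6 * a)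
    (hK : m ^ 3 * (x ^ 3 + x ^ 2 * w - 2 * x * w ^ 2 - w ^ 3 - a * (x * (x + w)))
      = G * w ^ 2 + (a ^ 2 + 8 * w ^ 2) * K)
    (h89 : ¬ (89:ℤ) ∣ G) (h3769 : ¬ (3769:ℤ) ∣ D) :
    jacobiSym G 89 * jacobiSym D 3769 = 1 := by
  obtain ⟨ε, u, v, hε, hd1, hd2⟩ := delta3769 x w y h
  obtain ⟨n, hn⟩ : ∃ n : ℕ, (n:ℤ) = a ^ 2 + 8 * w ^ 2 :=
    ⟨(a ^ 2 + 8 * w ^ 2).toNat, Int.toNat_of_nonneg (by positivity)⟩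
  have hn8 : n % 8 = 1 := by
    obtain ⟨b, hb⟩ : ∃ b, a = 2 * b + 1 := ⟨a / 2, by omega⟩
    obtain ⟨c, hc⟩ : ∃ c, b * (b + 1) = 2 * c := by
      obtain ⟨c, hc⟩ := Int.even_mul_succ_self b
      exact ⟨c, by rw [hc]; ring⟩
    have : (n:ℤ) = 8 * (c + w ^ 2) + 1 := by rw [hn, hb]; linear_combination 4 * hc
    omega
  have hnodd : Odd n := Nat.odd_iff.mpr (by omega)
  have hG0 : G ≠ 0 := fun h => h89 (by rw [h]; exact dvd_zero _)
  have hD0 : D ≠ 0 := fun h => h3769 (by rw [h]; exact dvd_zero _)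
  -- no odd prime divides both `w` and `a`
  have hwa : ∀ q : ℕ, q.Prime → q ≠ 2 → (q:ℤ) ∣ w → (q:ℤ) ∣ a → False := by
    intro q hq hq2 h1 h2
    have hqp := Nat.prime_iff_prime_int.mp hq
    have hmx : (q:ℤ) ∣ m * x := by
      have := dvd_add h2 (Dvd.dvd.mul_left h1 n0)
      rw [ha] at this; simpa using this
    rcases hqp.dvd_or_dvd hmx with h2 | h2
    · rcases hm with rfl | rfl
      · exact hqp.not_dvd_one h2
      · have : q ∣ 2 := by exact_mod_cast h2
        exact hq2 ((Nat.prime_dvd_prime_iff_eq hq (by norm_num)).mp this)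
    · exact cop_not_dvd h.1 hq ⟨h2, h1⟩
  have hpr : ∀ (q p : ℕ), q.Prime → p.Prime → (q:ℤ) ∣ (p:ℤ) → q = p := by
    intro q p hq hp h
    exact (Nat.prime_dvd_prime_iff_eq hq hp).mp (by exact_mod_cast h)
  have hca : ∀ q : ℤ, q ∣ c1 * a → q ∣ a := by
    intro q hq
    have : a = c1 * (c1 * a) := by linear_combination -a * hc1
    rw [this]; exact Dvd.dvd.mul_left hq _
  have hGw : ∀ q : ℕ, q.Prime → q ≠ 2 → (q:ℤ) ∣ G → (q:ℤ) ∣ w → False := by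
    intro q hq hq2 h1 h2
    refine hwa q hq hq2 h2 (hca _ ?_)
    have : c1 * a = c0 * w - G := by rw [hG]; ring
    rw [this]; exact dvd_sub (Dvd.dvd.mul_left h2 _) h1
  have h89' : ∀ q : ℕ, q.Prime → (q:ℤ) ∣ G → ¬ (q:ℤ) ∣ 89 := by
    intro q hq h1 h2
    have := hpr q 89 hq (by norm_num) h2
    subst this; exact h89 h1
  -- the symbol of `w`
  have jw : jacobiSym w n = 1 := by
    apply jac_num_int n hn8 w hw
    intro q hq hq2 hqw
    apply jac_sq q hq _ 1 a
    · rw [hn, show (a ^ 2 + 8 * w ^ 2) * 1 ^ 2 - a ^ 2 = w * (8 * w) by ring]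
      exact Dvd.dvd.mul_right hqw _
    · exact hwa q hq hq2 hqw
  have jG : jacobiSym G 89 * jacobiSym G n = 1 := by
    have : NeZero n := ⟨by omega⟩
    rw [← jacobiSym.mul_right]
    apply jac_num_int _ (by omega) G hG0
    intro q hq hq2 hqG
    apply jac_sq q hq _ 1 (89 * w)
    · push_cast
      rw [hn, show 89 * (a ^ 2 + 8 * w ^ 2) * 1 - (89 * w) ^ 2 = G * (-89 * (c0 * w + c1 * a)) by
        rw [hG]; linear_combination -89 * a ^ 2 * hc1 + 89 * w ^ 2 * hc0]
      exact Dvd.dvd.mul_right hqG _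
    · intro hd
      rcases (Nat.prime_iff_prime_int.mp hq).dvd_or_dvd hd with h1 | h1
      · exact h89' q hq hqG h1
      · exact hGw q hq hq2 hqG h1
  have jD : jacobiSym D 3769 * jacobiSym D n = 1 := by
    have : NeZero n := ⟨by omega⟩
    rw [← jacobiSym.mul_right]
    apply jac_num_int _ (by omega) D hD0
    intro q hq hq2 hqD
    have hqp := Nat.prime_iff_prime_int.mp hq
    by_cases hq3 : q = 3
    · subst hq3
      have h3w : ((3:ℕ):ℤ) ∣ w := by push_cast at *; omega
      apply jac_sq 3 hq _ 1 a
      · push_cast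
        rw [hn, show 3769 * (a ^ 2 + 8 * w ^ 2) * 1 - a ^ 2 = 3 * (1256 * a ^ 2) + w * (8 * 3769 * w) by ring]
        exact dvd_add (Dvd.intro _ rfl) (Dvd.dvd.mul_right h3w _)
      · exact hwa 3 hq hq2 h3w
    apply jac_sq q hq _ 6 (3769 * w)
    · push_cast
      rw [hn, show 3769 * (a ^ 2 + 8 * w ^ 2) * 36 - (3769 * w) ^ 2 = D * (-3769 * (59 * w + 6 * a)) by
        rw [hD]; ring]
      exact Dvd.dvd.mul_right hqD _
    · intro hd
      rcases hqp.dvd_or_dvd hd with h1 | h1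
      · have := hpr q 3769 hq (by norm_num) h1
        subst this; exact h3769 hqD
      · have h6 : (q:ℤ) ∣ 2 * (3 * a) := by
          have : 2 * (3 * a) = 59 * w - D := by rw [hD]; ring
          rw [this]; exact dvd_sub (Dvd.dvd.mul_left h1 _) hqD
        rcases hqp.dvd_or_dvd h6 with h2 | h2
        · exact hq2 (hpr q 2 hq (by norm_num) h2)
        rcases hqp.dvd_or_dvd h2 with h2 | h2
        · exact hq3 (hpr q 3 hq (by norm_num) h2)
        · exact hwa q hq hq2 h1 h2
  -- the main symbol
  have e1 : 2 * ε * D * (2 * w * u - a * v) ^ 2 =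
      8 * w ^ 3 * (x ^ 3 + x ^ 2 * w - 2 * x * w ^ 2 - w ^ 3 - a * (x * (x + w)))
      + (a ^ 2 + 8 * w ^ 2) * (ε * (2 * D * v ^ 2 + 48 * w * u * v)) := by
    rw [hD]
    linear_combination -8 * w ^ 3 * hd1 + 4 * w ^ 2 * a * hd2
  have jE : jacobiSym (m * ε * D * G * w) n = 1 := by
    apply jac_den _ n (by omega)
    intro q hq hqn
    have hqp := Nat.prime_iff_prime_int.mp hq
    have hq2 : q ≠ 2 := by rintro rfl; omega
    have hqN : (q:ℤ) ∣ a ^ 2 + 8 * w ^ 2 := by rw [← hn]; exact_mod_cast hqn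
    have hqw : ¬ (q:ℤ) ∣ w := by
      intro h1
      refine hwa q hq hq2 h1 (hqp.dvd_of_dvd_pow (n := 2) ?_)
      have : a ^ 2 = (a ^ 2 + 8 * w ^ 2) - w * (8 * w) := by ring
      rw [this]; exact dvd_sub hqN (Dvd.dvd.mul_right h1 _)
    have hqG : ¬ (q:ℤ) ∣ G := by
      intro h1
      have : (q:ℤ) ∣ 89 * w ^ 2 := by
        have : 89 * w ^ 2 = (a ^ 2 + 8 * w ^ 2) + G * (c0 * w + c1 * a) := by
          rw [hG]; linear_combination a ^ 2 * hc1 - w ^ 2 * hc0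
        rw [this]; exact dvd_add hqN (Dvd.dvd.mul_right h1 _)
      rcases hqp.dvd_or_dvd this with h2 | h2
      · exact h89' q hq h1 h2
      · exact hqw (hqp.dvd_of_dvd_pow h2)
    apply jac_sq q hq _ (2 * m * (2 * w * u - a * v)) (4 * G * w ^ 3)
    · rw [show m * ε * D * G * w * (2 * m * (2 * w * u - a * v)) ^ 2 - (4 * G * w ^ 3) ^ 2 =
        (a ^ 2 + 8 * w ^ 2) * (16 * w ^ 4 * G * K + 2 * m ^ 3 * G * w * (ε * (2 * D * v ^ 2 + 48 * w * u * v))) by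
        linear_combination 2 * m ^ 3 * G * w * e1 + 16 * w ^ 4 * G * hK]
      exact Dvd.dvd.mul_right hqN _
    · intro hd
      rcases hqp.dvd_or_dvd hd with h1 | h1
      · rcases hqp.dvd_or_dvd h1 with h1 | h1
        · have : (q:ℤ) ∣ (2:ℕ) := hqp.dvd_of_dvd_pow (n := 2) (by norm_num; exact h1)
          exact hq2 (hpr q 2 hq (by norm_num) this)
        · exact hqG h1
      · exact hqw (hqp.dvd_of_dvd_pow h1)
  have jm : jacobiSym m n = 1 := by
    rcases hm with rfl | rfl
    · exact jacobiSym.one_left n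
    · rw [jacobiSym.at_two hnodd, ZMod.χ₈_nat_mod_eight, hn8]; decide
  have jε : jacobiSym ε n = 1 := by
    rcases hε with rfl | rfl
    · exact jacobiSym.one_left n
    · exact jac_neg_one n (by omega)
  rw [jacobiSym.mul_left, jacobiSym.mul_left, jacobiSym.mul_left, jacobiSym.mul_left, jm, jε, jw] at jE
  linear_combination jD - jacobiSym G 89 * jacobiSym D 3769 * (jE) + jacobiSym D 3769 * jacobiSym D n * jG

/-- The order three automorphism. -/
theorem sig_pt (d x w y : ℤ) (h : IsPt d x w y) : IsPt d (-w) (x + w) y := by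
  obtain ⟨⟨a, b, hab⟩, h⟩ := h
  refine ⟨⟨a - b, a, by linear_combination hab⟩, ?_⟩
  rw [h]; ring

theorem w3769 (x w y : ℤ) (h : IsPt 3769 x w y) (hw : w ≠ 0) : jacobiSym w 3769 = 1 := by
  apply jac_num_int 3769 (by norm_num) w hw
  intro q hq _ hqw
  apply jac_sq q hq _ y (x ^ 3)
  · rw [show ((3769:ℕ):ℤ) * y ^ 2 - (x ^ 3) ^ 2 = w * (2 * x ^ 5 + 5 * x ^ 4 * w + 10 * x ^ 3 * w ^ 2
      + 10 * x ^ 2 * w ^ 3 + 4 * x * w ^ 4 + w ^ 5) by push_cast; linear_combination h.2]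
    exact Dvd.dvd.mul_right hqw _
  · intro hd
    exact cop_not_dvd h.1 hq ⟨(Nat.prime_iff_prime_int.mp hq).dvd_of_dvd_pow hd, hqw⟩

theorem chi3769 : ∀ r : ZMod 3769, (r = 899 ∨ r = 959 ∨ r = 2548) →
    quadraticChar (ZMod 3769) (59 - 6 * (r + 1)) = 1 ∧ quadraticChar (ZMod 3769) (59 - 6 * (r - 1)) = 1 ∧
    quadraticChar (ZMod 3769) (59 - 6 * (2 * r + 1)) = -1 := by
  rintro r (rfl | rfl | rfl) <;> decide +kernel

theorem abd3769 (x w y : ℤ) (h : IsPt 3769 x w y) (hw : w ≠ 0) :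
    ((x + w) % 2 = 1 → jacobiSym (8 * w - x) 89 ≠ 0 → jacobiSym (8 * w - x) 89 = 1) ∧
    ((x - w) % 2 = 1 → jacobiSym (x - 10 * w) 89 ≠ 0 → jacobiSym (x - 10 * w) 89 = 1) ∧
    ((2 * x + w) % 2 = 1 → jacobiSym (2 * x + 10 * w) 89 ≠ 0 → jacobiSym (2 * x + 10 * w) 89 = -1) := by
  have hj : ∀ L : ℤ, jacobiSym L 3769 = quadraticChar (ZMod 3769) (L : ZMod 3769) := by
    intro L; rw [← jacobiSym.legendreSym.to_jacobiSym]; rfl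
  have hj89 : ∀ L : ℤ, jacobiSym L 89 = quadraticChar (ZMod 89) (L : ZMod 89) := by
    intro L; rw [← jacobiSym.legendreSym.to_jacobiSym]; rfl
  have hne : ∀ L : ℤ, jacobiSym L 89 ≠ 0 → ¬ (89:ℤ) ∣ L := by
    intro L hL hd
    apply hL
    rw [hj89, (ZMod.intCast_zmod_eq_zero_iff_dvd L 89).mpr (by exact_mod_cast hd)]
    simp
  have hne' : ∀ L : ℤ, jacobiSym L 3769 ≠ 0 → ¬ (3769:ℤ) ∣ L := by
    intro L hL hd
    apply hL
    rw [hj, (ZMod.intCast_zmod_eq_zero_iff_dvd L 3769).mpr (by exact_mod_cast hd)]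
    simp
  have hjw := w3769 x w y h hw
  obtain ⟨-, r, hr, hx⟩ := root3769 x w y h
  obtain ⟨k1, k2, k3⟩ := chi3769 r hr
  rw [hj] at hjw
  have d1 : jacobiSym (59 * w - 6 * (x + w)) 3769 = 1 := by
    rw [hj]; push_cast
    rw [hx, show (59 * (w : ZMod 3769) - 6 * (r * w + w)) = (59 - 6 * (r + 1)) * w by ring, map_mul, k1, hjw]
    rfl
  have d2 : jacobiSym (59 * w - 6 * (x - w)) 3769 = 1 := by
    rw [hj]; push_cast
    rw [hx, show (59 * (w : ZMod 3769) - 6 * (r * w - w)) = (59 - 6 * (r - 1)) * w by ring, map_mul, k2, hjw]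
    rfl
  have d3 : jacobiSym (59 * w - 6 * (2 * x + w)) 3769 = -1 := by
    rw [hj]; push_cast
    rw [hx, show (59 * (w : ZMod 3769) - 6 * (2 * (r * w) + w)) = (59 - 6 * (2 * r + 1)) * w by ring, map_mul, k3, hjw]
    rfl
  refine ⟨fun ho hz => ?_, fun ho hz => ?_, fun ho hz => ?_⟩
  · have := bit3769 x w y h 1 (-1) 9 1 (x + w) (8 * w - x) _ (-w) (by norm_num) (by ring) ho hw
      (by norm_num) (by norm_num) (by ring) rfl (by ring) (hne _ hz) (hne' _ (by rw [d1]; norm_num))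
    rwa [d1, mul_one] at this
  · have := bit3769 x w y h 1 1 (-9) (-1) (x - w) (x - 10 * w) _ w (by norm_num) (by ring) ho hw
      (by norm_num) (by norm_num) (by ring) rfl (by ring) (hne _ hz) (hne' _ (by rw [d2]; norm_num))
    rwa [d2, mul_one] at this
  · have := bit3769 x w y h 2 (-1) 9 (-1) (2 * x + w) (2 * x + 10 * w) _ (-2 * x - 2 * w) (by norm_num) (by ring) ho hw
      (by norm_num) (by norm_num) (by ring) rfl (by ring) (hne _ hz) (hne' _ (by rw [d3]; norm_num))
    rw [d3] at this; linarith

theorem no_pt_3769_even (x w y : ℤ) (h : IsPt 3769 x w y) (hxe : x % 2 = 0) : False := by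
  obtain ⟨y', A, m, p, q, g, v, hpt, hA, hpq, hm, hh⟩ := pre3769 x w y h
  have hwo : w % 2 = 1 := by
    by_contra hcon
    exact cop_not_dvd h.1 (q := 2) (by norm_num) ⟨by push_cast; omega, by push_cast; omega⟩
  obtain ⟨t, ht, hch, hcur⟩ := chart 89 3769 x w y' hpt
  have h1 := cube_map _ 89 _ _ _ _ _ _ _ hh
  have h2 := cube_scale 89 _ t _ _ _ _ _ _ _ h1
  have h3 := trit_test 89 30 _ (by decide +kernel) (by norm_num) _ _ _ _ _ _ _ hm h2
  have hAx : (t ^ 3 * A : ZMod 89) = ((t * x) ^ 3 - 3 * (t * x) ^ 2 * (t * w) - 6 * (t * x) * (t * w) ^ 2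
      - (t * w) ^ 3 - 3 * (t ^ 3 * y')) * 45 := by
    have e1 := congrArg (Int.cast : ℤ → ZMod 89) hA
    push_cast at e1
    have h24 : (89 : ZMod 89) = 0 := by decide
    linear_combination (45 * t ^ 3) * e1 - (t ^ 3 * A) * h24
  have hyx : (t ^ 3 * ((3 * y' : ℤ) : ZMod 89)) = 3 * (t ^ 3 * y') := by push_cast; ring
  rw [hAx, hyx] at h3
  push_cast at hcur
  rcases hch with hw1 | ⟨hw0, hx1⟩
  · rw [hw1] at hcur h3
    simp only [mul_one, one_pow] at hcur h3
    obtain ⟨n1, n2, n3, n4, n5, hnot⟩ := loc89a (t * x) (t ^ 3 * y') hcur (p, q) hpq h3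
    have hj89 : ∀ L : ℤ, jacobiSym L 89 = χ89 (L : ZMod 89) := by
      intro L; rw [← jacobiSym.legendreSym.to_jacobiSym]; rfl
    have key : ∀ (L : ℤ) (s : ZMod 89), s = t * (L : ZMod 89) → χ89 s = χ89 t * jacobiSym L 89 := by
      intro L s hs; rw [hj89, hs, χ89, map_mul]
    have f1 := key (8 * w - x) (8 - t * x) (by push_cast; linear_combination -8 * hw1)
    have f2 := key (9 * x + w) (9 * (t * x) + 1) (by push_cast; linear_combination -hw1)
    have f3 := key (x - 10 * w) (t * x - 10) (by push_cast; linear_combination 10 * hw1)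
    have f4 := key (2 * x + 10 * w) (2 * (t * x) + 10) (by push_cast; linear_combination -10 * hw1)
    have f5 := key (10 * x + 8 * w) (10 * (t * x) + 8) (by push_cast; linear_combination -8 * hw1)
    rw [f1] at n1; rw [f2] at n2; rw [f3] at n3; rw [f4] at n4; rw [f5] at n5
    have hs1 := sig_pt _ x w y h
    have hs2 := sig_pt _ _ _ y hs1
    rw [show -w + (x + w) = x by ring] at hs2
    have hx0 : x ≠ 0 := by
      intro h0
      have := (root3769 _ _ _ hs2).1
      rw [h0] at this; exact this (by simp)
    obtain ⟨a1, b1, c1⟩ := abd3769 x w y h (by omega)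
    obtain ⟨-, -, c2⟩ := abd3769 _ _ y hs1 (by omega)
    obtain ⟨a2, -, -⟩ := abd3769 _ _ y hs2 hx0
    have g1 := a1 (by omega) (right_ne_zero_of_mul n1)
    have g3 := b1 (by omega) (right_ne_zero_of_mul n3)
    have g4 := c1 (by omega) (right_ne_zero_of_mul n4)
    rw [show 2 * -w + 10 * (x + w) = 10 * x + 8 * w by ring] at c2
    rw [show 8 * x - -(x + w) = 9 * x + w by ring] at a2
    have g5 := c2 (by omega) (right_ne_zero_of_mul n5)
    have g2 := a2 (by omega) (right_ne_zero_of_mul n2)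
    apply hnot
    rw [f1, f2, f3, f4, f5, g1, g2, g3, g4, g5]
    simp
  · rw [hw0, hx1] at hcur h3
    refine loc89b (t ^ 3 * y') (by rw [hcur]; ring) (p, q) hpq ?_
    simpa using h3

theorem no_pt_3769 (x w y : ℤ) (h : IsPt 3769 x w y) : False := by
  have hs1 := sig_pt _ x w y h
  have hs2 := sig_pt _ _ _ y hs1
  rcases Int.emod_two_eq_zero_or_one x with hx | hx
  · exact no_pt_3769_even _ _ _ h hx
  rcases Int.emod_two_eq_zero_or_one w with hw | hw
  · exact no_pt_3769_even _ _ _ hs1 (by omega)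
  · exact no_pt_3769_even _ _ _ hs2 (by omega)


theorem no_rational_point_on_twist_X1_18 (d : ℤ) (hd : d ∈ ({681, 1329, 1761, 2913, 3769, 5281, 6217, 7057, 7321} : Set ℤ)) : ¬ ∃ x y : ℚ, (d : ℚ) * y ^ 2 = x ^ 6 + 2 * x ^ 5 + 5 * x ^ 4 + 10 * x ^ 3 + 10 * x ^ 2 + 4 * x + 1 := by
  rintro ⟨x, y, h⟩
  have key : Squarefree d → ∃ X W Y, IsPt d X W Y := fun hs => exists_pt d hs x y h
  have sq : Squarefree d.natAbs → Squarefree d := Int.squarefree_natAbs.mp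
  simp only [Set.mem_insert_iff, Set.mem_singleton_iff] at hd
  rcases hd with rfl | rfl | rfl | rfl | rfl | rfl | rfl | rfl | rfl <;>
    obtain ⟨X, W, Y, hp⟩ := key (sq (by rw [Nat.squarefree_iff_minSqFac]; decide +kernel))
  · exact no_pt_681 X W Y hp
  · exact no_pt_1329 X W Y hp
  · exact no_pt_1761 X W Y hp
  · exact no_pt_2913 X W Y hp
  · exact no_pt_3769 X W Y hp
  · exact no_pt_5281 X W Y hp
  · exact no_pt_6217 X W Y hp
  · exact no_pt_7057 X W Y hp
  · exact no_pt_7321 X W Y hp
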